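/- Let n ≥ 2 and let G be a finitely generated group admitting a surjective group homomorphism ρ : G → GL(n,ℤ). Then G has uniformly exponential growth, i.e., ω(G) > 1. -/

import Mathlib

open Filter

variable {G : Type*} [Group G]

noncomputable def wordLength (S : Set G) (g : G) : ℕ :=
  sInf {k | ∃ w : List G, w.length = k ∧ (∀ x ∈ w, x ∈ S ∨ x⁻¹ ∈ S) ∧ w.prod = g}

noncomputable def ballCard (S : Set G) (n : ℕ) : ℕ :=
  Set.ncard {g : G | wordLength S g ≤ n}

noncomputable def growthRate (S : Set G) : ℝ :=
  limUnder atTop (fun n : ℕ => (ballCard S n : ℝ) ^ ((n : ℝ)⁻¹))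

noncomputable def minGrowth (G : Type*) [Group G] : ℝ :=
  sInf {x : ℝ | ∃ S : Finset G, Subgroup.closure (S : Set G) = ⊤ ∧ growthRate (S : Set G) = x}



/-- the two-letter semigroup generated by `a` and `b` is free (on words of equal length) -/
def FreeSemi {H : Type*} [Monoid H] (a b : H) : Prop :=
  ∀ l l' : List Bool, l.length = l'.length →
    (l.map (fun c => bif c then a else b)).prod = (l'.map (fun c => bif c then a else b)).prod →
    l = l'

/-- `g` is a product of at most `k` letters from `S ∪ S⁻¹` -/
def WordLe {H : Type*} [Group H] (S : Set H) (k : ℕ) (g : H) : Prop :=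
  ∃ w : List H, w.length ≤ k ∧ (∀ x ∈ w, x ∈ S ∨ x⁻¹ ∈ S) ∧ w.prod = g

theorem WordLe.mul {H : Type*} [Group H] {S : Set H} {k k' : ℕ} {g g' : H}
    (h : WordLe S k g) (h' : WordLe S k' g') : WordLe S (k + k') (g * g') := by
  obtain ⟨w, hw, h1, rfl⟩ := h
  obtain ⟨w', hw', h1', rfl⟩ := h'
  refine ⟨w ++ w', by simp; omega, ?_, by simp⟩
  intro x hx
  rcases List.mem_append.1 hx with h | h
  · exact h1 x h
  · exact h1' x h

theorem WordLe.one {H : Type*} [Group H] {S : Set H} : WordLe S 0 (1 : H) :=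
  ⟨[], by simp, by simp, by simp⟩

theorem WordLe.mono {H : Type*} [Group H] {S : Set H} {k k' : ℕ} {g : H}
    (h : WordLe S k g) (hk : k ≤ k') : WordLe S k' g := by
  obtain ⟨w, hw, h1, h2⟩ := h
  exact ⟨w, hw.trans hk, h1, h2⟩

theorem WordLe.list_prod {H : Type*} [Group H] {S : Set H} {k : ℕ} (l : List H)
    (h : ∀ g ∈ l, WordLe S k g) : WordLe S (l.length * k) l.prod := by
  induction l with
  | nil => simpa using WordLe.one
  | cons a t ih =>
    rw [List.prod_cons, List.length_cons, add_mul, one_mul, add_comm]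
    exact (h a (by simp)).mul (ih (fun g hg => h g (by simp [hg])))

theorem exists_wordLe_of_mem_closure {H : Type*} [Group H] {S : Set H} {g : H}
    (hg : g ∈ Subgroup.closure S) : ∃ k, WordLe S k g := by
  rw [← Subgroup.mem_toSubmonoid, Subgroup.closure_toSubmonoid] at hg
  obtain ⟨l, hl, h⟩ := Submonoid.exists_list_of_mem_closure hg
  exact ⟨l.length, l, le_rfl, hl, h⟩

theorem wordLength_le_iff {H : Type*} [Group H] {S : Set H} (hS : Subgroup.closure S = ⊤)
    (k : ℕ) (g : H) : wordLength S g ≤ k ↔ WordLe S k g := by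
  have hne : {k | ∃ w : List H, w.length = k ∧ (∀ x ∈ w, x ∈ S ∨ x⁻¹ ∈ S) ∧
      w.prod = g}.Nonempty := by
    obtain ⟨k, w, _, h1, h2⟩ := exists_wordLe_of_mem_closure (S := S) (g := g) (by simp [hS])
    exact ⟨w.length, w, rfl, h1, h2⟩
  constructor
  · intro h
    obtain ⟨w, hw, h1, h2⟩ := Nat.sInf_mem hne
    exact ⟨w, by rw [hw]; exact h, h1, h2⟩
  · rintro ⟨w, hw, h1, h2⟩
    have h3 : wordLength S g ≤ w.length := Nat.sInf_le ⟨w, rfl, h1, h2⟩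
    exact h3.trans hw

theorem finite_wordLe {H : Type*} [Group H] (S : Finset H) (k : ℕ) :
    {g : H | WordLe (S : Set H) k g}.Finite := by
  classical
  let T : Finset H := S ∪ S.image (fun x => x⁻¹)
  have h1 : {l : List T | l.length ≤ k}.Finite := List.finite_length_le _ _
  refine (h1.image (fun l => (l.map Subtype.val).prod)).subset ?_
  rintro g ⟨w, hw, h1, h2⟩
  have hT : ∀ x ∈ w, x ∈ T := by
    intro x hx
    rcases h1 x hx with h | h
    · exact Finset.mem_union_left _ (by simpa using h)
    · exact Finset.mem_union_right _ (Finset.mem_image.2 ⟨x⁻¹, by simpa using h, by simp⟩)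
  refine ⟨w.attach.map (fun x => ⟨x.1, hT x.1 x.2⟩), by simpa using hw, ?_⟩
  simp [List.map_map, Function.comp_def, h2]

theorem growth_lower {H : Type*} [Group H] (S : Finset H)
    (hS : Subgroup.closure (S : Set H) = ⊤) (ℓ : ℕ) (hℓ : 0 < ℓ) (a b : H)
    (ha : WordLe (S : Set H) ℓ a) (hb : WordLe (S : Set H) ℓ b) (hf : FreeSemi a b) :
    (2 : ℝ) ^ ((ℓ : ℝ)⁻¹) ≤ growthRate (S : Set H) := by
  classical
  have hball : ∀ k, {g : H | wordLength (S : Set H) g ≤ k} = {g : H | WordLe (S : Set H) k g} := by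
    intro k; ext g; exact wordLength_le_iff hS k g
  have hfin := finite_wordLe S
  have hbc : ∀ k, ballCard (S : Set H) k = {g : H | WordLe (S : Set H) k g}.ncard := by
    intro k; rw [ballCard, hball]
  have hpos : ∀ k, 0 < ballCard (S : Set H) k := by
    intro k
    rw [hbc, Set.ncard_pos (hfin k)]
    exact ⟨1, WordLe.one.mono (Nat.zero_le _)⟩
  have hsub : ∀ m k, ballCard (S : Set H) (m + k) ≤
      ballCard (S : Set H) m * ballCard (S : Set H) k := by
    intro m k
    rw [hbc, hbc, hbc, ← Set.ncard_prod]
    have : {g : H | WordLe (S : Set H) (m + k) g} ⊆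
        (fun p : H × H => p.1 * p.2) ''
          ({g : H | WordLe (S : Set H) m g} ×ˢ {g : H | WordLe (S : Set H) k g}) := by
      rintro g ⟨w, hw, h1, h2⟩
      refine ⟨((w.take m).prod, (w.drop m).prod), ⟨⟨w.take m, by simp, ?_, rfl⟩,
        ⟨w.drop m, by simp; omega, ?_, rfl⟩⟩, ?_⟩
      · intro x hx; exact h1 x (List.mem_of_mem_take hx)
      · intro x hx; exact h1 x (List.mem_of_mem_drop hx)
      · simpa [List.prod_take_mul_prod_drop] using h2
    have hfp := (hfin m).prod (hfin k)
    exact (Set.ncard_le_ncard this (hfp.image _)).trans (Set.ncard_image_le hfp)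
  have hsa : Subadditive (fun k => Real.log (ballCard (S : Set H) k)) := by
    intro m k
    rw [← Real.log_mul (by exact_mod_cast (hpos m).ne') (by exact_mod_cast (hpos k).ne')]
    apply Real.log_le_log (by exact_mod_cast hpos _)
    exact_mod_cast hsub m k
  have hlim := hsa.tendsto_lim ⟨0, by
    rintro _ ⟨k, rfl⟩
    exact div_nonneg (Real.log_natCast_nonneg _) (Nat.cast_nonneg _)⟩
  have hlim2 : Tendsto (fun k : ℕ => (ballCard (S : Set H) k : ℝ) ^ ((k : ℝ)⁻¹)) atTop
      (nhds (Real.exp hsa.lim)) := by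
    refine ((Real.continuous_exp.tendsto _).comp hlim).congr ?_
    intro k
    rw [Real.rpow_def_of_pos (by exact_mod_cast hpos k)]
    simp [div_eq_mul_inv]
  have hgr : growthRate (S : Set H) = Real.exp hsa.lim := hlim2.limUnder_eq
  rw [hgr]
  have htt : Tendsto (fun r : ℕ => ℓ * (r + 1)) atTop atTop := by
    apply tendsto_atTop_mono (f := fun r : ℕ => r) _ tendsto_id
    intro r
    nlinarith
  refine ge_of_tendsto (hlim2.comp htt) (Eventually.of_forall ?_)
  intro r
  have hcount : 2 ^ (r + 1) ≤ ballCard (S : Set H) (ℓ * (r + 1)) := by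
    rw [hbc]
    let F : (List.Vector Bool (r + 1)) → H :=
      fun v => (v.1.map (fun c => bif c then a else b)).prod
    have hFinj : Function.Injective F := by
      intro v v' h
      exact Subtype.ext (hf v.1 v'.1 (by rw [v.2, v'.2]) h)
    have : Set.range F ⊆ {g : H | WordLe (S : Set H) (ℓ * (r + 1)) g} := by
      rintro _ ⟨v, rfl⟩
      have := WordLe.list_prod (S := (S : Set H)) (k := ℓ)
        (v.1.map (fun c => bif c then a else b)) (by
          intro g hg
          obtain ⟨c, _, rfl⟩ := List.mem_map.1 hg
          cases c <;> simpa)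
      rw [List.length_map, v.2, mul_comm] at this
      exact this
    have h2 := Set.ncard_le_ncard this (hfin _)
    rw [← Set.image_univ, Set.ncard_image_of_injective _ hFinj, Set.ncard_univ] at h2
    simpa using h2
  have h1 : ((2 : ℝ) ^ (r + 1)) ^ (((ℓ * (r + 1) : ℕ) : ℝ)⁻¹) = (2 : ℝ) ^ ((ℓ : ℝ)⁻¹) := by
    rw [← Real.rpow_natCast, ← Real.rpow_mul (by norm_num)]
    congr 1
    push_cast
    have : (ℓ : ℝ) ≠ 0 := by positivity
    have : (r : ℝ) + 1 ≠ 0 := by positivity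
    field_simp
  rw [← h1]
  exact Real.rpow_le_rpow (by positivity) (by exact_mod_cast hcount) (by positivity)

/-- In a finite group word lengths are bounded uniformly over all generating sets. -/
theorem finite_group_wordLe (Q : Type*) [Group Q] [Finite Q] :
    ∃ k, ∀ (T : Set Q) (q : Q), q ∈ Subgroup.closure T → WordLe T k q := by
  classical
  have : ∀ p : Set Q × Q, ∃ k, p.2 ∈ Subgroup.closure p.1 → WordLe p.1 k p.2 := by
    intro p
    by_cases h : p.2 ∈ Subgroup.closure p.1
    · obtain ⟨k, hk⟩ := exists_wordLe_of_mem_closure h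
      exact ⟨k, fun _ => hk⟩
    · exact ⟨0, fun h' => absurd h' h⟩
  choose k hk using this
  obtain ⟨N, hN⟩ := (Set.finite_range k).bddAbove
  exact ⟨N, fun T q h => (hk (T, q) h).mono (hN ⟨(T, q), rfl⟩)⟩

theorem bounded_lift {Q : Type*} [Group Q] [Finite Q] {k : ℕ}
    (hk : ∀ (T : Set Q) (q : Q), q ∈ Subgroup.closure T → WordLe T k q)
    {H : Type*} [Group H] (φ : H →* Q) (S : Set H)
    (hS : Subgroup.closure S = ⊤) (h : H) : ∃ g : H, WordLe S k g ∧ φ g = φ h := by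
  have h1 : φ h ∈ Subgroup.closure (φ '' S) := by
    rw [← MonoidHom.map_closure, hS]
    exact ⟨h, by simp, rfl⟩
  obtain ⟨w, hw, hw1, hw2⟩ := hk _ _ h1
  rw [← hw2]
  clear hw2
  suffices ∃ v : List H, v.length = w.length ∧ (∀ x ∈ v, x ∈ S ∨ x⁻¹ ∈ S) ∧
      φ v.prod = w.prod by
    obtain ⟨v, hv, hv1, hv2⟩ := this
    exact ⟨v.prod, ⟨v, by omega, hv1, rfl⟩, hv2⟩
  clear hw
  induction w with
  | nil => exact ⟨[], by simp⟩
  | cons a t ih =>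
    obtain ⟨v, hv, hv1, hv2⟩ := ih (fun x hx => hw1 x (by simp [hx]))
    have : ∃ y : H, (y ∈ S ∨ y⁻¹ ∈ S) ∧ φ y = a := by
      rcases hw1 a (by simp) with ⟨y, hy, h⟩ | ⟨y, hy, h⟩
      · exact ⟨y, Or.inl hy, h⟩
      · exact ⟨y⁻¹, Or.inr (by simpa using hy), by rw [map_inv, h, inv_inv]⟩
    obtain ⟨y, hy, rfl⟩ := this
    refine ⟨y :: v, by simp [hv], ?_, by simp [hv2]⟩
    intro x hx
    rcases List.mem_cons.1 hx with rfl | h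
    · exact hy
    · exact hv1 x h


open Matrix in
/-- discriminant-type Hankel determinant -/
def hk {n : ℕ} {R : Type*} [CommRing R] (A : Matrix (Fin n) (Fin n) R) : R :=
  det (of fun a b : Fin n => trace (A ^ (a.1 + b.1)))

open Matrix in
/-- Gram determinant of the family `A ^ a * D * A ^ b` -/
def fk {n : ℕ} {R : Type*} [CommRing R] (A D : Matrix (Fin n) (Fin n) R) : R :=
  det (of fun p q : Fin n × Fin n =>
    trace (A ^ (p.1.1 + q.1.1) * D * A ^ (p.2.1 + q.2.1) * D))

open Matrix in
/-- sum of the principal minors of size `k` -/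
def Ek {n : ℕ} {R : Type*} [CommRing R] (k : ℕ) (M : Matrix (Fin n) (Fin n) R) : R :=
  ∑ s ∈ Finset.univ.powersetCard k, (M.submatrix (Subtype.val : s → Fin n) Subtype.val).det

open Matrix in
/-- Hankel determinant detecting principal minors of size `k` of `D` in an eigenbasis of `A` -/
def gk {n : ℕ} {R : Type*} [CommRing R] (k : ℕ) (A D : Matrix (Fin n) (Fin n) R) : R :=
  det (of fun a b : Fin (Finset.univ.powersetCard k : Finset (Finset (Fin n))).card =>
    Ek k (A ^ (a.1 + b.1) * D))

/-- the nondegeneracy condition -/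
def Good {n : ℕ} {R : Type*} [CommRing R] (A D : Matrix (Fin n) (Fin n) R) : Prop :=
  hk A ≠ 0 ∧ fk A D ≠ 0 ∧ ∀ k, gk k A D ≠ 0

section
variable {n : ℕ} {R R' : Type*} [CommRing R] [CommRing R']
open Matrix

theorem map_pow' (φ : R →+* R') (A : Matrix (Fin n) (Fin n) R) (k : ℕ) :
    (A ^ k).map φ = (A.map φ) ^ k := by
  have := map_pow φ.mapMatrix A k
  simpa using this

theorem hk_map (φ : R →+* R') (A : Matrix (Fin n) (Fin n) R) : hk (A.map φ) = φ (hk A) := by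
  unfold hk
  rw [RingHom.map_det]
  congr 1
  ext a b
  simp only [RingHom.mapMatrix_apply, map_apply, of_apply]
  rw [← map_pow', ← AddMonoidHom.map_trace]

theorem fk_map (φ : R →+* R') (A D : Matrix (Fin n) (Fin n) R) :
    fk (A.map φ) (D.map φ) = φ (fk A D) := by
  unfold fk
  rw [RingHom.map_det]
  congr 1
  ext a b
  simp only [RingHom.mapMatrix_apply, map_apply, of_apply]
  rw [← map_pow', ← map_pow', ← Matrix.map_mul, ← Matrix.map_mul, ← Matrix.map_mul]
  exact (AddMonoidHom.map_trace φ.toAddMonoidHom _).symm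

theorem Ek_map (φ : R →+* R') (k : ℕ) (M : Matrix (Fin n) (Fin n) R) :
    Ek k (M.map φ) = φ (Ek k M) := by
  unfold Ek
  rw [map_sum]
  refine Finset.sum_congr rfl fun s _ => ?_
  rw [RingHom.map_det]
  rfl

theorem gk_map (φ : R →+* R') (k : ℕ) (A D : Matrix (Fin n) (Fin n) R) :
    gk k (A.map φ) (D.map φ) = φ (gk k A D) := by
  unfold gk
  rw [RingHom.map_det]
  congr 1
  ext a b
  simp only [RingHom.mapMatrix_apply, map_apply, of_apply]
  rw [← map_pow', ← Matrix.map_mul, Ek_map]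

theorem Good.of_map (φ : R →+* R') {A D : Matrix (Fin n) (Fin n) R}
    (h : Good (A.map φ) (D.map φ)) : Good A D := by
  obtain ⟨h1, h2, h3⟩ := h
  refine ⟨fun h => h1 ?_, fun h => h2 ?_, fun k h => h3 k ?_⟩
  · rw [hk_map, h, map_zero]
  · rw [fk_map, h, map_zero]
  · rw [gk_map, h, map_zero]

/-- conjugation -/
theorem conj_pow_mat {P Pi : Matrix (Fin n) (Fin n) R} (h : Pi * P = 1)
    (A : Matrix (Fin n) (Fin n) R) (k : ℕ) (h' : P * Pi = 1) :
    (P * A * Pi) ^ k = P * A ^ k * Pi := by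
  induction k with
  | zero => simp [h']
  | succ k ih =>
    rw [pow_succ, ih, pow_succ]
    calc P * A ^ k * Pi * (P * A * Pi) = P * A ^ k * (Pi * P) * A * Pi := by noncomm_ring
      _ = _ := by rw [h]; noncomm_ring

theorem trace_conj' {P Pi : Matrix (Fin n) (Fin n) R} (h : Pi * P = 1)
    (A : Matrix (Fin n) (Fin n) R) : trace (P * A * Pi) = trace A := by
  rw [Matrix.trace_mul_cycle, h, one_mul]

theorem Ek_conj {P Pi : Matrix (Fin n) (Fin n) R} (h : Pi * P = 1) (h' : P * Pi = 1)
    (k : ℕ) (A : Matrix (Fin n) (Fin n) R) : Ek k (P * A * Pi) = Ek k A := by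
  by_cases hk : k ≤ n
  · have e1 := charpoly_coeff_eq_sum_minors (P * A * Pi) k (by simpa using hk)
    have e2 := charpoly_coeff_eq_sum_minors A k (by simpa using hk)
    have hc : (P * A * Pi).charpoly = A.charpoly := by
      let u : (Matrix (Fin n) (Fin n) R)ˣ := ⟨P, Pi, h', h⟩
      have := Matrix.charpoly_units_conj u A
      rw [show ((u : Matrix (Fin n) (Fin n) R))⁻¹ = Pi from Matrix.inv_eq_left_inv h] at this
      exact this
    rw [hc, e2] at e1
    have := congrArg (fun z => (-1) ^ k * z) e1
    simp only [← mul_assoc, ← mul_pow] at this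
    simp only [mul_neg, mul_one, neg_neg, one_pow, one_mul] at this
    exact this.symm
  · unfold Ek
    rw [Finset.powersetCard_eq_empty.2 (by simpa using hk)]
    simp

theorem hankel_det {N : ℕ} (μ c : Fin N → R) :
    det (of fun a b : Fin N => ∑ j, μ j ^ (a.1 + b.1) * c j) =
      det (vandermonde μ) ^ 2 * ∏ j, c j := by
  have : (of fun a b : Fin N => ∑ j, μ j ^ (a.1 + b.1) * c j) =
      (vandermonde μ)ᵀ * diagonal c * vandermonde μ := by
    ext a b
    rw [mul_apply]
    simp only [of_apply, mul_diagonal, transpose_apply, vandermonde_apply]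
    refine Finset.sum_congr rfl fun j _ => ?_
    ring
  rw [this, det_mul, det_mul, det_diagonal, det_transpose]
  ring

theorem hk_diag (l : Fin n → R) : hk (diagonal l) = det (vandermonde l) ^ 2 := by
  have := hankel_det l (fun _ => 1)
  simp only [mul_one, Finset.prod_const_one] at this
  rw [← this, hk]
  congr 1
  ext a b
  simp [diagonal_pow, trace_diagonal]

theorem diag_pow_mul_apply (l : Fin n → R) (D : Matrix (Fin n) (Fin n) R) (a : ℕ) (i j : Fin n) :
    (diagonal l ^ a * D) i j = l i ^ a * D i j := by
  rw [diagonal_pow, diagonal_mul, Pi.pow_apply]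

theorem trace_diag2 (l : Fin n → R) (D : Matrix (Fin n) (Fin n) R) (a b : ℕ) :
    trace (diagonal l ^ a * D * diagonal l ^ b * D) =
      ∑ i, ∑ j, l i ^ a * l j ^ b * (D i j * D j i) := by
  rw [mul_assoc _ (diagonal l ^ b) D]
  generalize hX : diagonal l ^ a * D = X
  generalize hY : diagonal l ^ b * D = Y
  simp only [trace, diag_apply, mul_apply]
  subst hX hY
  refine Finset.sum_congr rfl fun i _ => Finset.sum_congr rfl fun j _ => ?_
  rw [diag_pow_mul_apply, diag_pow_mul_apply]
  ring

theorem trace_diag1 (l : Fin n → R) (D : Matrix (Fin n) (Fin n) R) (a : ℕ) :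
    trace (diagonal l ^ a * D) = ∑ i, l i ^ a * D i i := by
  simp only [trace, diag_apply, diagonal_pow, diagonal_mul, Pi.pow_apply]

theorem trace_diag3 (l : Fin n → R) (D : Matrix (Fin n) (Fin n) R) (a b c : ℕ) :
    trace (diagonal l ^ a * D * diagonal l ^ b * D * diagonal l ^ c * D) =
      ∑ i, ∑ k, ∑ j, l i ^ a * l j ^ b * l k ^ c * (D i j * D j k * D k i) := by
  rw [mul_assoc _ (diagonal l ^ c) D, mul_assoc _ (diagonal l ^ b) D]
  generalize hX : diagonal l ^ a * D = X
  generalize hY : diagonal l ^ b * D = Y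
  generalize hZ : diagonal l ^ c * D = Z
  simp only [trace, diag_apply, mul_apply, Finset.sum_mul]
  subst hX hY hZ
  refine Finset.sum_congr rfl fun i _ => Finset.sum_congr rfl fun j _ =>
    Finset.sum_congr rfl fun k _ => ?_
  rw [diag_pow_mul_apply, diag_pow_mul_apply, diag_pow_mul_apply]
  ring

open scoped Kronecker in
theorem fk_diag (l : Fin n → R) (D : Matrix (Fin n) (Fin n) R) :
    fk (diagonal l) D = det (vandermonde l ⊗ₖ vandermonde l) ^ 2 *
      ∏ p : Fin n × Fin n, (D p.1 p.2 * D p.2 p.1) := by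
  have : (of fun p q : Fin n × Fin n =>
    trace (diagonal l ^ (p.1.1 + q.1.1) * D * diagonal l ^ (p.2.1 + q.2.1) * D)) =
      (vandermonde l ⊗ₖ vandermonde l)ᵀ * diagonal (fun p => D p.1 p.2 * D p.2 p.1) *
        (vandermonde l ⊗ₖ vandermonde l) := by
    ext a b
    rw [mul_apply]
    simp only [of_apply, mul_diagonal, transpose_apply, kroneckerMap_apply, vandermonde_apply]
    rw [trace_diag2, ← Finset.sum_product']
    refine Finset.sum_congr rfl fun j _ => ?_
    ring
  rw [fk, this, det_mul, det_mul, det_diagonal, det_transpose]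
  ring

theorem minor_diag (l : Fin n → R) (D : Matrix (Fin n) (Fin n) R) (a : ℕ) (s : Finset (Fin n)) :
    ((diagonal l ^ a * D).submatrix (Subtype.val : s → Fin n) Subtype.val).det =
      (∏ i ∈ s, l i) ^ a * (D.submatrix (Subtype.val : s → Fin n) Subtype.val).det := by
  have : (diagonal l ^ a * D).submatrix (Subtype.val : s → Fin n) (Subtype.val : s → Fin n) =
      diagonal (fun i : s => l i ^ a) *
        D.submatrix (Subtype.val : s → Fin n) (Subtype.val : s → Fin n) := by
    ext i j
    simp [diagonal_pow, diagonal_mul]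
  rw [this, det_mul, det_diagonal, Finset.prod_pow, Finset.prod_coe_sort s l]

theorem gk_diag (k : ℕ) (l : Fin n → R) (D : Matrix (Fin n) (Fin n) R)
    (e : Fin (Finset.univ.powersetCard k : Finset (Finset (Fin n))).card ≃
      (Finset.univ.powersetCard k : Finset (Finset (Fin n)))) :
    gk k (diagonal l) D = det (vandermonde (fun j => ∏ i ∈ (e j).1, l i)) ^ 2 *
      ∏ j, (D.submatrix (Subtype.val : (e j).1 → Fin n) Subtype.val).det := by
  rw [← hankel_det, gk]
  congr 1
  ext a b
  simp only [of_apply, Ek, minor_diag]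
  rw [← Finset.sum_coe_sort, ← e.sum_comp]

theorem good_diag {K : Type*} [Field K] (l : Fin n → K) (D : Matrix (Fin n) (Fin n) K)
    (hl : ∀ s t : Finset (Fin n), s.card = t.card → ∏ i ∈ s, l i = ∏ i ∈ t, l i → s = t)
    (hD : ∀ i j, D i j ≠ 0)
    (hm : ∀ s : Finset (Fin n), (D.submatrix (Subtype.val : s → Fin n) Subtype.val).det ≠ 0) :
    Good (diagonal l) D := by
  have hl1 : Function.Injective l := by
    intro i j hij
    have := hl {i} {j} (by simp) (by simpa using hij)
    simpa using this
  have hv : det (vandermonde l) ≠ 0 := det_vandermonde_ne_zero_iff.2 hl1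
  refine ⟨?_, ?_, fun k => ?_⟩
  · rw [hk_diag]; exact pow_ne_zero _ hv
  · rw [fk_diag, det_kronecker]
    refine mul_ne_zero (pow_ne_zero _ (mul_ne_zero (pow_ne_zero _ hv) (pow_ne_zero _ hv))) ?_
    exact Finset.prod_ne_zero_iff.2 fun p _ => mul_ne_zero (hD _ _) (hD _ _)
  · rw [gk_diag k l D (Finset.equivFin _).symm]
    refine mul_ne_zero (pow_ne_zero _ (det_vandermonde_ne_zero_iff.2 ?_))
      (Finset.prod_ne_zero_iff.2 fun j _ => hm _)
    intro a b hab
    have h := hl _ _ ?_ hab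
    · exact (Finset.equivFin _).symm.injective (Subtype.ext h)
    · rw [(Finset.mem_powersetCard.1 ((Finset.equivFin _).symm a).2).2,
        (Finset.mem_powersetCard.1 ((Finset.equivFin _).symm b).2).2]

theorem hk_conj {P Pi : Matrix (Fin n) (Fin n) R} (h : Pi * P = 1) (h' : P * Pi = 1)
    (A : Matrix (Fin n) (Fin n) R) : hk (P * A * Pi) = hk A := by
  unfold hk
  congr 1
  ext a b
  rw [of_apply, of_apply, conj_pow_mat h _ _ h', trace_conj' h]

theorem conj_mul' {P Pi : Matrix (Fin n) (Fin n) R} (h : Pi * P = 1)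
    (A B : Matrix (Fin n) (Fin n) R) : (P * A * Pi) * (P * B * Pi) = P * (A * B) * Pi := by
  calc _ = P * A * (Pi * P) * B * Pi := by noncomm_ring
    _ = _ := by rw [h]; noncomm_ring

theorem fk_conj {P Pi : Matrix (Fin n) (Fin n) R} (h : Pi * P = 1) (h' : P * Pi = 1)
    (A D : Matrix (Fin n) (Fin n) R) : fk (P * A * Pi) (P * D * Pi) = fk A D := by
  unfold fk
  congr 1
  ext a b
  rw [of_apply, of_apply, conj_pow_mat h _ _ h', conj_pow_mat h _ _ h', conj_mul' h, conj_mul' h,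
    conj_mul' h, trace_conj' h]

theorem gk_conj {P Pi : Matrix (Fin n) (Fin n) R} (h : Pi * P = 1) (h' : P * Pi = 1) (k : ℕ)
    (A D : Matrix (Fin n) (Fin n) R) : gk k (P * A * Pi) (P * D * Pi) = gk k A D := by
  unfold gk
  congr 1
  ext a b
  rw [of_apply, of_apply, conj_pow_mat h _ _ h', conj_mul' h, Ek_conj h h']

end


section
open Matrix

theorem freeSemi_pingpong {n t : Type*} [Fintype n] [DecidableEq n]
    (a b : Matrix n n ℂ) (ha : IsUnit a) (hb : IsUnit b) (X Y : Set (Matrix n t ℂ))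
    (hne : X.Nonempty) (hXY : ∀ F, F ∈ X → F ∈ Y → False)
    (haX : ∀ F, F ∈ X ∨ F ∈ Y → a * F ∈ X) (hbX : ∀ F, F ∈ X ∨ F ∈ Y → b * F ∈ Y) :
    FreeSemi a b := by
  obtain ⟨F, hF⟩ := hne
  have key : ∀ l : List Bool, (l.map (fun c => bif c then a else b)).prod * F ∈ X ∨
      (l.map (fun c => bif c then a else b)).prod * F ∈ Y := by
    intro l
    induction l with
    | nil => left; simpa using hF
    | cons c l ih =>
      rw [List.map_cons, List.prod_cons, Matrix.mul_assoc]
      cases c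
      · right; exact hbX _ ih
      · left; exact haX _ ih
  intro l
  induction l with
  | nil =>
    intro l' hl _
    exact (List.eq_nil_of_length_eq_zero (by simpa using hl.symm)).symm
  | cons c l ih =>
    intro l' hl hp
    cases l' with
    | nil => simp at hl
    | cons c' l' =>
      have hl' : l.length = l'.length := by simpa using hl
      simp only [List.map_cons, List.prod_cons] at hp
      have hcc : c = c' := by
        by_contra hne
        have h1 := key l
        have h2 := key l'
        have hp' := congrArg (· * F) hp
        simp only [Matrix.mul_assoc] at hp'
        cases c <;> cases c' <;> simp at hne
        · have e1 := hbX _ h1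
          have e2 := haX _ h2
          simp only [cond_false, cond_true] at hp'
          rw [hp'] at e1
          exact hXY _ e2 e1
        · have e1 := haX _ h1
          have e2 := hbX _ h2
          simp only [cond_false, cond_true] at hp'
          rw [hp'] at e1
          exact hXY _ e1 e2
      subst hcc
      rw [ih l' hl']
      cases c
      · exact hb.mul_left_cancel hp
      · exact ha.mul_left_cancel hp

theorem vec_bound {t : Type*} [Fintype t] [DecidableEq t] (N : Matrix t t ℂ) (c : ℝ)
    (hN : ∀ a b, (2 * Fintype.card t : ℝ) * ‖N a b‖ ≤ 1) (v : t → ℂ) (hc : 0 ≤ c)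
    (hv : ∀ k, ‖(v ᵥ* (1 + N)) k‖ ≤ c) (k : t) : ‖v k‖ ≤ 2 * c := by
  have : Nonempty t := ⟨k⟩
  obtain ⟨m, hm⟩ := Finite.exists_max (fun k => ‖v k‖)
  refine (hm k).trans ?_
  have h1 := hv m
  rw [Matrix.vecMul_add, Matrix.vecMul_one, Pi.add_apply] at h1
  have hpos : (0 : ℝ) < Fintype.card t := by exact_mod_cast Fintype.card_pos
  have h2 : ‖(v ᵥ* N) m‖ ≤ ‖v m‖ / 2 := by
    calc ‖(v ᵥ* N) m‖ = ‖∑ a, v a * N a m‖ := rfl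
      _ ≤ ∑ a, ‖v a * N a m‖ := norm_sum_le _ _
      _ ≤ ∑ a : t, ‖v m‖ * (1 / (2 * Fintype.card t)) := by
        refine Finset.sum_le_sum fun a _ => ?_
        rw [norm_mul]
        refine mul_le_mul (hm a) ?_ (norm_nonneg _) (norm_nonneg _)
        rw [le_div_iff₀ (by positivity), mul_comm]
        exact hN a m
      _ = ‖v m‖ / 2 := by
        rw [Finset.sum_const, Finset.card_univ, nsmul_eq_mul]
        field_simp
  have h3 : ‖v m‖ ≤ ‖v m + (v ᵥ* N) m‖ + ‖(v ᵥ* N) m‖ := by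
    have := norm_sub_le (v m + (v ᵥ* N) m) ((v ᵥ* N) m)
    simpa using this
  linarith

theorem one_add_isUnit {t : Type*} [Fintype t] [DecidableEq t] (N : Matrix t t ℂ)
    (hN : ∀ a b, (2 * Fintype.card t : ℝ) * ‖N a b‖ ≤ 1) : IsUnit (1 + N) := by
  rw [Matrix.isUnit_iff_isUnit_det, isUnit_iff_ne_zero]
  intro h0
  obtain ⟨v, hv0, hv⟩ := Matrix.exists_vecMul_eq_zero_iff.2 h0
  apply hv0
  ext k
  have := vec_bound N 0 hN v le_rfl (fun k => by rw [hv]; simp) k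
  simpa using this

theorem mul_insert {a b c : Type*} [Fintype b] [DecidableEq b] (A : Matrix a b ℂ)
    (Y Z : Matrix b b ℂ) (h : Y * Z = 1) (C : Matrix b c ℂ) : A * C = A * Y * (Z * C) := by
  rw [Matrix.mul_assoc, ← Matrix.mul_assoc Y, h, Matrix.one_mul]

theorem norm_mul_apply_le {a b c : Type*} [Fintype b] (A : Matrix a b ℂ) (B : Matrix b c ℂ)
    (x y : ℝ) (i : a) (j : c) (hx : ∀ k, ‖A i k‖ ≤ x) (hy : ∀ k, ‖B k j‖ ≤ y) (hx0 : 0 ≤ x) :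
    ‖(A * B) i j‖ ≤ Fintype.card b * (x * y) := by
  rw [Matrix.mul_apply]
  calc _ ≤ ∑ k, ‖A i k * B k j‖ := norm_sum_le _ _
    _ ≤ ∑ k : b, x * y := Finset.sum_le_sum fun k _ => by
        rw [norm_mul]; exact mul_le_mul (hx k) (hy k) (norm_nonneg _) hx0
    _ = _ := by rw [Finset.sum_const, Finset.card_univ, nsmul_eq_mul]

/-- standard frames -/
def StdF {n : ℕ} (T : Finset (Fin n)) (ε : ℝ) : Set (Matrix (Fin n) T ℂ) :=
  {H | H.submatrix (Subtype.val : T → Fin n) id = 1 ∧ ∀ j k, j ∉ T → ‖H j k‖ ≤ ε}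

/-- frames close to the coordinate plane -/
def XF {n : ℕ} (T : Finset (Fin n)) (ε : ℝ) : Set (Matrix (Fin n) T ℂ) :=
  {F | ∃ H ∈ StdF T ε, ∃ C : Matrix T T ℂ, IsUnit C ∧ F = H * C}

theorem XF_mono {n : ℕ} (T : Finset (Fin n)) {ε ε' : ℝ} (h : ε ≤ ε') : XF T ε ⊆ XF T ε' := by
  rintro F ⟨H, ⟨h1, h2⟩, C, hC, rfl⟩
  exact ⟨H, ⟨h1, fun j k hj => (h2 j k hj).trans h⟩, C, hC, rfl⟩

theorem diag_XF {n : ℕ} (T : Finset (Fin n)) {S ε : ℝ} (μ : Fin n → ℂ) (hμ : ∀ i, μ i ≠ 0)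
    (hS : ∀ j k, j ∉ T → k ∈ T → ‖μ j‖ * S ≤ ‖μ k‖ * ε) (F : Matrix (Fin n) T ℂ)
    (hF : F ∈ XF T S) : diagonal μ * F ∈ XF T ε := by
  obtain ⟨H, ⟨h1, h2⟩, C, hC, rfl⟩ := hF
  have hd : diagonal (fun k : T => (μ k)⁻¹) * diagonal (fun k : T => μ k) = 1 := by
    rw [diagonal_mul_diagonal, ← diagonal_one]
    congr 1; ext k
    exact inv_mul_cancel₀ (hμ k)
  refine ⟨diagonal μ * H * diagonal (fun k : T => (μ k)⁻¹), ⟨?_, ?_⟩,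
    diagonal (fun k : T => μ k) * C, ?_, ?_⟩
  · ext i k
    have := congrFun (congrFun h1 i) k
    simp only [submatrix_apply, id] at this
    simp only [submatrix_apply, id, mul_diagonal, diagonal_mul, this]
    by_cases hik : i = k
    · subst hik; simp [hμ]
    · simp [hik]
  · intro j k hj
    rw [mul_diagonal, diagonal_mul, norm_mul, norm_mul, norm_inv, ← div_eq_mul_inv,
      div_le_iff₀ (norm_pos_iff.2 (hμ _))]
    have := hS j k hj k.2
    nlinarith [mul_le_mul_of_nonneg_left (h2 j k hj) (norm_nonneg (μ j))]
  · refine IsUnit.mul ?_ hC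
    rw [Matrix.isUnit_iff_isUnit_det, det_diagonal, isUnit_iff_ne_zero]
    exact Finset.prod_ne_zero_iff.2 fun k _ => hμ _
  · rw [← Matrix.mul_assoc]; exact mul_insert _ _ _ hd _

theorem pp_main {n : ℕ} (hn : 2 ≤ n) (T : Finset (Fin n)) (hT : T.Nonempty) (hT' : ∃ j, j ∉ T)
    (D : Matrix (Fin n) (Fin n) ℂ) (hD : IsUnit D) (αi : Matrix T T ℂ)
    (hα : D.submatrix (Subtype.val : T → Fin n) (Subtype.val : T → Fin n) * αi = 1)
    (M : ℝ) (hM : 2 * (n : ℝ) ≤ M) (hDM : ∀ i j, ‖D i j‖ ≤ M) (hαM : ∀ i j, ‖αi i j‖ ≤ M)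
    (hlow : ∀ j k, j ∉ T → k ∈ T → 1 ≤ M * ‖D j k‖)
    (μ : Fin n → ℂ) (hμ : ∀ i, μ i ≠ 0)
    (hgap : ∀ j k, j ∉ T → k ∈ T → ‖μ j‖ * M ^ 10 ≤ ‖μ k‖) :
    FreeSemi (diagonal μ) (D * diagonal μ) := by
  have hn' : (2 : ℝ) ≤ n := by exact_mod_cast hn
  have hM4 : 4 ≤ M := by linarith
  have hM0 : 0 < M := by linarith
  have hTn : (Fintype.card T : ℝ) ≤ n := by
    have := Finset.card_le_univ T
    simp only [Fintype.card_fin] at this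
    rw [Fintype.card_coe]; exact_mod_cast this
  set ε : ℝ := (M ^ 6)⁻¹ with hε
  have hε0 : 0 < ε := by positivity
  have hεM : ε * M ^ 6 = 1 := inv_mul_cancel₀ (by positivity)
  have hε1 : ε ≤ 1 := by
    rw [hε]; exact inv_le_one_of_one_le₀ (one_le_pow₀ (by linarith))
  set α := D.submatrix (Subtype.val : T → Fin n) (Subtype.val : T → Fin n) with hαdef
  have hα' : αi * α = 1 := mul_eq_one_comm.1 hα
  -- entries of H
  have hH1 : ∀ H ∈ StdF T ε, ∀ i k, ‖H i k‖ ≤ 1 := by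
    rintro H ⟨h1, h2⟩ i k
    by_cases hi : i ∈ T
    · have := congrFun (congrFun h1 ⟨i, hi⟩) k
      simp only [submatrix_apply, id] at this
      rw [this, Matrix.one_apply]
      split_ifs <;> simp
    · exact (h2 i k hi).trans hε1
  have hDH : ∀ H ∈ StdF T ε, ∀ i k, ‖(D * H) i k‖ ≤ M ^ 2 := by
    intro H hH i k
    have := norm_mul_apply_le D H M 1 i k (hDM i) (fun a => hH1 H hH a k) hM0.le
    rw [Fintype.card_fin] at this
    nlinarith
  -- difference
  have hdiff : ∀ H ∈ StdF T ε, ∀ i (k : T), ‖(D * H) i k - D i k‖ ≤ M ^ 2 * ε := by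
    intro H hH i k
    obtain ⟨h1, h2⟩ := hH
    let P : Matrix (Fin n) T ℂ := (1 : Matrix (Fin n) (Fin n) ℂ).submatrix id Subtype.val
    have e : (D * H) i k - D i k = (D * (H - P)) i k := by
      rw [Matrix.mul_sub, Matrix.sub_apply]
      congr 1
      simp [P, mul_apply, Matrix.one_apply]
    have := norm_mul_apply_le D (H - P) M ε i k (hDM i) (fun a => ?_) hM0.le
    · rw [e]; rw [Fintype.card_fin] at this
      have : (n : ℝ) * (M * ε) ≤ M * (M * ε) :=
        mul_le_mul_of_nonneg_right (by linarith) (by positivity)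
      nlinarith
    · by_cases ha : a ∈ T
      · have := congrFun (congrFun h1 ⟨a, ha⟩) k
        simp only [submatrix_apply, id] at this
        have h0 : (H - P) a k = 0 := by
          rw [Matrix.sub_apply, this]
          simp [P, Matrix.one_apply, Subtype.ext_iff]
        rw [h0, norm_zero]; exact hε0.le
      · have h0 : P a k = 0 := by
          have : a ≠ k := fun h => ha (h ▸ k.2)
          simp [P, Matrix.one_apply, this]
        rw [Matrix.sub_apply, h0, sub_zero]
        exact h2 a k ha
  -- the top block
  have htop : ∀ H ∈ StdF T ε, ∃ N : Matrix T T ℂ,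
      (∀ a b, (2 * Fintype.card T : ℝ) * ‖N a b‖ ≤ 1) ∧
      (D * H).submatrix (Subtype.val : T → Fin n) id = α * (1 + N) := by
    intro H hH
    refine ⟨αi * ((D * H).submatrix (Subtype.val : T → Fin n) id - α), ?_, ?_⟩
    · intro a b
      have := norm_mul_apply_le αi ((D * H).submatrix (Subtype.val : T → Fin n) id - α) M
        (M ^ 2 * ε) a b (hαM a) (fun c => hdiff H hH c b) hM0.le
      have h4 : (Fintype.card T : ℝ) * (M * (M ^ 2 * ε)) ≤ M * (M * (M ^ 2 * ε)) :=
        mul_le_mul_of_nonneg_right (by linarith) (by positivity)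
      have h5 : (2 * Fintype.card T : ℝ) ≤ M := by linarith
      calc (2 * Fintype.card T : ℝ) * _ ≤ M * (M * (M * (M ^ 2 * ε))) :=
            mul_le_mul h5 (this.trans h4) (norm_nonneg _) hM0.le
        _ = M ^ 5 * ε := by ring
        _ ≤ M ^ 6 * ε := mul_le_mul_of_nonneg_right
            (pow_le_pow_right₀ (by linarith) (by norm_num)) hε0.le
        _ = 1 := by rw [mul_comm]; exact hεM
    · rw [mul_add, ← mul_assoc, hα]; simp
  have hXne : (XF T ε).Nonempty := by
    refine ⟨_, (1 : Matrix (Fin n) (Fin n) ℂ).submatrix id Subtype.val, ⟨?_, ?_⟩, 1, isUnit_one,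
      rfl⟩
    · ext a b; simp only [submatrix_apply, id, Matrix.one_apply, Subtype.ext_iff]
    · intro j k hj
      have : j ≠ k := fun h => hj (h ▸ k.2)
      simp [Matrix.one_apply, this, hε0.le]
  -- Y inside a bounded region
  have hY : ∀ F ∈ XF T ε, D * F ∈ XF T (M ^ 4) := by
    rintro F ⟨H, hH, C, hC, rfl⟩
    obtain ⟨N, hN, hN'⟩ := htop H hH
    have hu := one_add_isUnit N hN
    obtain ⟨u, hu'⟩ := hu
    have hα1 : IsUnit α := ⟨⟨α, αi, hα, hα'⟩, rfl⟩
    set Ui : Matrix T T ℂ := ((u⁻¹ : (Matrix T T ℂ)ˣ) : Matrix T T ℂ) with hUi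
    have hU1 : (1 + N) * Ui = 1 := by rw [← hu']; exact u.mul_inv
    have hU2 : Ui * (1 + N) = 1 := by rw [← hu']; exact u.inv_mul
    refine ⟨D * H * (Ui * αi), ⟨?_, ?_⟩, α * (1 + N) * C, ?_, ?_⟩
    · have : (D * H * (Ui * αi)).submatrix (Subtype.val : T → Fin n) id =
        (D * H).submatrix (Subtype.val : T → Fin n) id * (Ui * αi) := rfl
      rw [this, hN', mul_assoc, ← mul_assoc (1 + N), hU1, one_mul, hα]
    · intro j k hj
      have hb : ∀ c, ‖(D * H * Ui) j c‖ ≤ 2 * M ^ 2 := by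
        intro c
        refine vec_bound N (M ^ 2) hN ((D * H * Ui) j) (by positivity) ?_ c
        intro k
        have : ((D * H * Ui) j ᵥ* (1 + N)) k = (D * H) j k := by
          have : (D * H * Ui * (1 + N) : Matrix (Fin n) T ℂ) j k = (D * H) j k := by
            rw [Matrix.mul_assoc, hU2, Matrix.mul_one]
          rw [← this]; rfl
        rw [this]
        exact hDH H hH j k
      rw [← Matrix.mul_assoc]
      have := norm_mul_apply_le (D * H * Ui) αi (2 * M ^ 2) M j k hb (fun c => hαM c k)
        (by positivity)
      refine this.trans ?_
      have h4 : (2 * Fintype.card T : ℝ) * M ^ 3 ≤ M * M ^ 3 :=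
        mul_le_mul_of_nonneg_right (by linarith) (by positivity)
      nlinarith
    · refine IsUnit.mul (IsUnit.mul hα1 ?_) hC
      exact ⟨u, hu'⟩
    · have : Ui * αi * (α * (1 + N)) = 1 := by
        rw [mul_assoc, ← mul_assoc αi, hα', one_mul, hU2]
      rw [← Matrix.mul_assoc]; exact mul_insert _ _ _ this _
  have ha : ∀ F ∈ XF T (M ^ 4), diagonal μ * F ∈ XF T ε := by
    intro F hF
    refine diag_XF T μ hμ ?_ F hF
    intro j k hj hk
    have := mul_le_mul_of_nonneg_right (hgap j k hj hk) hε0.le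
    calc ‖μ j‖ * M ^ 4 = ‖μ j‖ * M ^ 4 * (ε * M ^ 6) := by rw [hεM, mul_one]
      _ = ‖μ j‖ * M ^ 10 * ε := by ring
      _ ≤ _ := this
  have hεS : ε ≤ M ^ 4 := hε1.trans (one_le_pow₀ (by linarith))
  have haU : IsUnit (diagonal μ) := by
    rw [Matrix.isUnit_iff_isUnit_det, det_diagonal, isUnit_iff_ne_zero]
    exact Finset.prod_ne_zero_iff.2 fun k _ => hμ _
  have haX : ∀ F, F ∈ XF T ε ∨ F ∈ (fun F => D * F) '' XF T ε → diagonal μ * F ∈ XF T ε := by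
    rintro F (hF | ⟨F, hF, rfl⟩)
    · exact ha F (XF_mono T hεS hF)
    · exact ha _ (hY F hF)
  refine freeSemi_pingpong (diagonal μ) (D * diagonal μ) haU (hD.mul haU) (XF T ε)
    ((fun F => D * F) '' XF T ε) hXne ?_ haX ?_
  · rintro _ ⟨H', hH', C', hC', e⟩ ⟨_, ⟨H, hH, C, hC, rfl⟩, rfl⟩
    obtain ⟨j, hj⟩ := hT'
    obtain ⟨k, hk⟩ := hT
    have e2 : (D * H).submatrix (Subtype.val : T → Fin n) id * C = C' := by
      have h3 := congrArg (fun F => F.submatrix (Subtype.val : T → Fin n) (id : T → T)) e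
      simp only at h3
      have h4 : (H' * C').submatrix (Subtype.val : T → Fin n) (id : T → T) =
        H'.submatrix (Subtype.val : T → Fin n) (id : T → T) * C' := rfl
      rw [h4, hH'.1, one_mul] at h3
      rw [← h3, ← Matrix.mul_assoc]; rfl
    have e3 : D * H = H' * (D * H).submatrix (Subtype.val : T → Fin n) id := by
      obtain ⟨u, rfl⟩ := hC
      have : D * H * (u : Matrix T T ℂ) * ((u⁻¹ : (Matrix T T ℂ)ˣ) : Matrix T T ℂ) =
          H' * (D * H).submatrix (Subtype.val : T → Fin n) id * (u : Matrix T T ℂ) *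
            ((u⁻¹ : (Matrix T T ℂ)ˣ) : Matrix T T ℂ) := by
        rw [Matrix.mul_assoc H', e2, Matrix.mul_assoc D H]
        exact congrArg (· * ((u⁻¹ : (Matrix T T ℂ)ˣ) : Matrix T T ℂ)) e
      rwa [Matrix.mul_assoc (D * H), Units.mul_inv, Matrix.mul_one, Matrix.mul_assoc _ u.val,
        Units.mul_inv, Matrix.mul_one] at this
    have b1 : ‖(D * H) j ⟨k, hk⟩‖ ≤ M ^ 3 * ε := by
      rw [e3]
      have := norm_mul_apply_le H' ((D * H).submatrix (Subtype.val : T → Fin n) id) ε (M ^ 2)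
        j ⟨k, hk⟩ (fun c => hH'.2 j c hj) (fun c => hDH H hH _ _) hε0.le
      refine this.trans ?_
      have h4 : (Fintype.card T : ℝ) * (ε * M ^ 2) ≤ M * (ε * M ^ 2) :=
        mul_le_mul_of_nonneg_right (by linarith) (by positivity)
      linarith
    have b2 := hdiff H hH j ⟨k, hk⟩
    have b3 := hlow j k hj hk
    have b4 : ‖D j k‖ ≤ M ^ 3 * ε + M ^ 2 * ε := by
      have := norm_sub_le ((D * H) j ⟨k, hk⟩) ((D * H) j ⟨k, hk⟩ - D j k)
      rw [sub_sub_cancel] at this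
      linarith
    have b5 : 1 ≤ M * (M ^ 3 * ε + M ^ 2 * ε) := b3.trans (mul_le_mul_of_nonneg_left b4 hM0.le)
    have b6 : M ^ 4 + M ^ 3 < M ^ 6 := by
      have : 0 < M ^ 3 := by positivity
      nlinarith
    nlinarith
  · intro F hF
    exact ⟨_, haX F hF, (Matrix.mul_assoc _ _ _).symm⟩

end


/-- functions bounded by a power of `R` -/
def BdP {I : Type*} (R : I → ℝ) (φ : I → ℂ) : Prop := ∃ C : ℕ, ∀ i, ‖φ i‖ ≤ R i ^ C

/-- matrix-valued functions with entries bounded by a power of `R` -/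
def BdM {I : Type*} {a b : Type*} (R : I → ℝ) (M : I → Matrix a b ℂ) : Prop :=
  ∀ p q, BdP R (fun i => M i p q)

section
open Matrix
variable {I : Type*} {R : I → ℝ}

theorem BdP.add (hR : ∀ i, 2 ≤ R i) {φ ψ : I → ℂ} (h1 : BdP R φ) (h2 : BdP R ψ) :
    BdP R (fun i => φ i + ψ i) := by
  obtain ⟨C, hC⟩ := h1
  obtain ⟨C', hC'⟩ := h2
  refine ⟨max C C' + 1, fun i => (norm_add_le _ _).trans ?_⟩
  have hi : 1 ≤ R i := by linarith [hR i]
  have e1 := (hC i).trans (pow_le_pow_right₀ hi (le_max_left C C'))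
  have e2 := (hC' i).trans (pow_le_pow_right₀ hi (le_max_right C C'))
  rw [pow_succ]
  nlinarith [hR i, pow_pos (show (0 : ℝ) < R i by linarith) (max C C')]

theorem BdP.mul {φ ψ : I → ℂ} (h1 : BdP R φ) (h2 : BdP R ψ) :
    BdP R (fun i => φ i * ψ i) := by
  obtain ⟨C, hC⟩ := h1
  obtain ⟨C', hC'⟩ := h2
  refine ⟨C + C', fun i => ?_⟩
  rw [norm_mul, pow_add]
  exact mul_le_mul (hC i) (hC' i) (norm_nonneg _) ((norm_nonneg _).trans (hC i))

theorem BdP.const (hR : ∀ i, 2 ≤ R i) (c : ℂ) : BdP R (fun _ => c) := by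
  obtain ⟨C, hC⟩ := pow_unbounded_of_one_lt ‖c‖ (by norm_num : (1 : ℝ) < 2)
  exact ⟨C, fun i => hC.le.trans (pow_le_pow_left₀ (by norm_num) (hR i) C)⟩

theorem BdP.sum (hR : ∀ i, 2 ≤ R i) {κ : Type*} (s : Finset κ) (φ : κ → I → ℂ)
    (h : ∀ k ∈ s, BdP R (φ k)) : BdP R (fun i => ∑ k ∈ s, φ k i) := by
  classical
  induction s using Finset.induction_on with
  | empty => simpa using BdP.const hR 0
  | insert a s ha ih =>
    simp only [Finset.sum_insert ha]
    exact BdP.add hR (h a (Finset.mem_insert_self _ _))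
      (ih fun k hk => h k (Finset.mem_insert_of_mem hk))

theorem BdP.prod (hR : ∀ i, 2 ≤ R i) {κ : Type*} (s : Finset κ) (φ : κ → I → ℂ)
    (h : ∀ k ∈ s, BdP R (φ k)) : BdP R (fun i => ∏ k ∈ s, φ k i) := by
  classical
  induction s using Finset.induction_on with
  | empty => simpa using BdP.const hR 1
  | insert a s ha ih =>
    simp only [Finset.prod_insert ha]
    exact BdP.mul (h a (Finset.mem_insert_self _ _))
      (ih fun k hk => h k (Finset.mem_insert_of_mem hk))

theorem BdP.pow (hR : ∀ i, 2 ≤ R i) {φ : I → ℂ} (h : BdP R φ) (k : ℕ) :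
    BdP R (fun i => φ i ^ k) := by
  have := BdP.prod hR (Finset.range k) (fun _ => φ) (fun _ _ => h)
  simpa using this

theorem BdP.inv_of_mul {φ ψ : I → ℂ} (h : BdP R ψ) (h1 : ∀ i, 1 ≤ ‖ψ i * φ i‖) :
    BdP R (fun i => (φ i)⁻¹) := by
  obtain ⟨C, hC⟩ := h
  refine ⟨C, fun i => le_trans ?_ (hC i)⟩
  have := h1 i
  rw [norm_mul] at this
  have hp : 0 < ‖φ i‖ := by
    rcases (norm_nonneg (φ i)).eq_or_lt with h | h
    · rw [← h] at this; norm_num at this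
    · exact h
  rw [norm_inv, inv_le_iff_one_le_mul₀ hp]
  exact this

theorem BdP.inv_of_one_le (hR : ∀ i, 2 ≤ R i) {φ : I → ℂ} (h1 : ∀ i, 1 ≤ ‖φ i‖) :
    BdP R (fun i => (φ i)⁻¹) :=
  BdP.inv_of_mul (BdP.const hR 1) (by simpa using h1)

theorem BdP.inv_of_prod (hR : ∀ i, 2 ≤ R i) {κ : Type*} (s : Finset κ)
    (φ : κ → I → ℂ) (ψ : I → ℂ)
    (h : ∀ k ∈ s, BdP R (φ k)) (hψ : BdP R ψ) (h1 : ∀ i, 1 ≤ ‖ψ i * ∏ k ∈ s, φ k i‖)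
    (k : κ) (hk : k ∈ s) : BdP R (fun i => (φ k i)⁻¹) := by
  classical
  refine BdP.inv_of_mul (ψ := fun i => ψ i * ∏ k ∈ s.erase k, φ k i)
    (BdP.mul hψ (BdP.prod hR _ _ fun j hj => h j (Finset.mem_of_mem_erase hj))) fun i => ?_
  rw [mul_assoc, Finset.prod_erase_mul _ _ hk]
  exact h1 i

theorem BdM.mul (hR : ∀ i, 2 ≤ R i) {a b c : Type*} [Fintype b] {M : I → Matrix a b ℂ}
    {N : I → Matrix b c ℂ} (hM : BdM R M) (hN : BdM R N) : BdM R (fun i => M i * N i) := by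
  intro p q
  simp only [Matrix.mul_apply]
  exact BdP.sum hR _ _ fun k _ => BdP.mul (hM p k) (hN k q)

theorem BdM.one (hR : ∀ i, 2 ≤ R i) {a : Type*} [DecidableEq a] :
    BdM R (fun _ : I => (1 : Matrix a a ℂ)) := fun _ _ => BdP.const hR _

theorem BdM.trace (hR : ∀ i, 2 ≤ R i) {a : Type*} [Fintype a] {M : I → Matrix a a ℂ}
    (hM : BdM R M) : BdP R (fun i => (M i).trace) :=
  BdP.sum hR _ _ fun k _ => hM k k

theorem BdM.det (hR : ∀ i, 2 ≤ R i) {a : Type*} [Fintype a] [DecidableEq a]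
    {M : I → Matrix a a ℂ} (hM : BdM R M) : BdP R (fun i => (M i).det) := by
  simp only [Matrix.det_apply']
  exact BdP.sum hR _ _ fun σ _ => BdP.mul (BdP.const hR _) (BdP.prod hR _ _ fun k _ => hM _ _)

theorem BdM.inv (hR : ∀ i, 2 ≤ R i) {a : Type*} [Fintype a] [DecidableEq a]
    {M : I → Matrix a a ℂ} (hM : BdM R M) (h : BdP R (fun i => (M i).det⁻¹)) :
    BdM R (fun i => (M i)⁻¹) := by
  intro p q
  simp only [Matrix.inv_def, Ring.inverse_eq_inv', Matrix.smul_apply, smul_eq_mul]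
  refine BdP.mul h ?_
  simp only [adjugate_apply]
  refine BdM.det hR (M := fun i => (M i).updateRow q (Pi.single p 1)) ?_
  intro r s
  by_cases hr : r = q
  · subst hr
    simp only [updateRow_self]
    exact BdP.const hR _
  · simp only [updateRow_ne hr]
    exact hM r s

/-- evaluation of words -/
def wd {H : Type*} [Monoid H] (x : Fin 4 → H) (l : List (Fin 4)) : H := (l.map x).prod

theorem wd_append {H : Type*} [Monoid H] (x : Fin 4 → H) (l l' : List (Fin 4)) :
    wd x (l ++ l') = wd x l * wd x l' := by simp [wd]

theorem wd_rep {H : Type*} [Monoid H] (x : Fin 4 → H) (m : Fin 4) (k : ℕ) :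
    wd x (List.replicate k m) = x m ^ k := by simp [wd]

theorem wd_single {H : Type*} [Monoid H] (x : Fin 4 → H) (m : Fin 4) :
    wd x [m] = x m := by simp [wd]

theorem wd_map {H H' : Type*} [Monoid H] [Monoid H'] (f : H →* H') (x : Fin 4 → H)
    (l : List (Fin 4)) : wd (fun m => f (x m)) l = f (wd x l) := by
  simp [wd, map_list_prod, Function.comp_def]

theorem eig_bound {N : Type*} [Fintype N] [DecidableEq N] (M P Pi : Matrix N N ℂ) (μ : N → ℂ)
    (hP : Pi * P = 1) (hM : M = P * diagonal μ * Pi) (k : N) :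
    ‖μ k‖ ≤ ∑ a, ∑ b, ‖M a b‖ := by
  have : Nonempty N := ⟨k⟩
  obtain ⟨m, hm⟩ := Finite.exists_max (fun a => ‖P a k‖)
  have e1 : M * P = P * diagonal μ := by rw [hM, mul_assoc, hP, mul_one]
  have hpos : 0 < ‖P m k‖ := by
    by_contra h0
    have hz : ∀ a, P a k = 0 := fun a => by
      have := hm a
      exact norm_eq_zero.1 (le_antisymm (by linarith) (norm_nonneg _))
    have := congrFun (congrFun hP k) k
    rw [mul_apply] at this
    simp [hz] at this
  have e2 := congrFun (congrFun e1 m) k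
  rw [mul_diagonal, mul_apply] at e2
  have : ‖P m k‖ * ‖μ k‖ ≤ ‖P m k‖ * ∑ b, ‖M m b‖ := by
    rw [← norm_mul, ← e2, Finset.mul_sum]
    refine (norm_sum_le _ _).trans (Finset.sum_le_sum fun b _ => ?_)
    rw [norm_mul, mul_comm]
    exact mul_le_mul_of_nonneg_right (hm b) (norm_nonneg _)
  refine (le_of_mul_le_mul_left this hpos).trans ?_
  exact Finset.single_le_sum (f := fun a => ∑ b, ‖M a b‖)
    (fun a _ => Finset.sum_nonneg fun b _ => norm_nonneg _) (Finset.mem_univ m)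

theorem BdP.of_le {φ : I → ℂ} (f : I → ℝ) (hf : BdP R (fun i => (f i : ℂ)))
    (h : ∀ i, ‖φ i‖ ≤ f i) : BdP R φ := by
  obtain ⟨C, hC⟩ := hf
  refine ⟨C, fun i => (h i).trans ((le_abs_self _).trans ?_)⟩
  simpa using hC i

theorem BdP.norm {φ : I → ℂ} (h : BdP R φ) : BdP R (fun i => ((‖φ i‖ : ℝ) : ℂ)) := by
  obtain ⟨C, hC⟩ := h
  exact ⟨C, fun i => by simpa using hC i⟩

end


section
open Matrix
open scoped Kronecker
variable {I : Type*} {R : I → ℝ} {n : ℕ}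

theorem gramT {N : Type*} (w w' : N → Matrix (Fin n) (Fin n) ℂ) (x : Matrix (Fin n) (Fin n) ℂ) :
    (of fun p q : N => trace (w p * x * w' q)) =
      (of fun (p : N) (c : Fin n × Fin n) => w p c.1 c.2) *
        ((1 : Matrix (Fin n) (Fin n) ℂ) ⊗ₖ x) *
        (of fun (c : Fin n × Fin n) (q : N) => w' q c.2 c.1) := by
  ext p q
  simp only [of_apply, trace, diag_apply, mul_apply, Fintype.sum_prod_type, kroneckerMap_apply,
    Matrix.one_apply]
  refine Finset.sum_congr rfl fun r _ => Finset.sum_congr rfl fun c _ => ?_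
  congr 1
  simp [Finset.sum_comm]

/-- the Gram family -/
def gW (x0 x1 : Matrix (Fin n) (Fin n) ℂ) (p : Fin n × Fin n) : Matrix (Fin n) (Fin n) ℂ :=
  x0 ^ p.1.1 * x1 * x0 ^ p.2.1

/-- the dual Gram family -/
def gW' (x0 x1 : Matrix (Fin n) (Fin n) ℂ) (p : Fin n × Fin n) : Matrix (Fin n) (Fin n) ℂ :=
  x0 ^ p.2.1 * x1 * x0 ^ p.1.1

/-- the coordinates of the Gram family -/
def gB (x0 x1 : Matrix (Fin n) (Fin n) ℂ) : Matrix (Fin n × Fin n) (Fin n × Fin n) ℂ :=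
  of fun p c => gW x0 x1 p c.1 c.2

theorem gram_entry (x0 x1 : Matrix (Fin n) (Fin n) ℂ) (a b c d : ℕ) :
    trace (x0 ^ a * x1 * x0 ^ b * 1 * (x0 ^ d * x1 * x0 ^ c)) =
      trace (x0 ^ (a + c) * x1 * x0 ^ (b + d) * x1) := by
  have h1 : x0 ^ a * x1 * x0 ^ b * 1 * (x0 ^ d * x1 * x0 ^ c) =
      (x0 ^ a * x1 * x0 ^ b * x0 ^ d * x1) * x0 ^ c := by
    simp only [mul_one, mul_assoc]
  rw [h1, trace_mul_comm]
  have h2 : x0 ^ c * (x0 ^ a * x1 * x0 ^ b * x0 ^ d * x1) =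
      x0 ^ (a + c) * x1 * x0 ^ (b + d) * x1 := by
    rw [add_comm a c, pow_add, pow_add]
    simp only [mul_assoc]
  rw [h2]

theorem gram_det (x0 x1 : Matrix (Fin n) (Fin n) ℂ) :
    (of fun p q => trace (gW x0 x1 p * 1 * gW' x0 x1 q)).det = fk x0 x1 := by
  have : (of fun p q => trace (gW x0 x1 p * 1 * gW' x0 x1 q)) =
    (of fun p q : Fin n × Fin n =>
    trace (x0 ^ (p.1.1 + q.1.1) * x1 * x0 ^ (p.2.1 + q.2.1) * x1)) := by
    ext p q
    exact gram_entry x0 x1 _ _ _ _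
  rw [this, fk]

theorem gram_conj (x0 x1 x : Matrix (Fin n) (Fin n) ℂ) (h : fk x0 x1 ≠ 0) :
    IsUnit (gB x0 x1).det ∧
    (of fun p q => trace (gW x0 x1 p * x * gW' x0 x1 q)) *
      (of fun p q => trace (gW x0 x1 p * 1 * gW' x0 x1 q))⁻¹ =
      gB x0 x1 * ((1 : Matrix (Fin n) (Fin n) ℂ) ⊗ₖ x) * (gB x0 x1)⁻¹ := by
  have h1 := gramT (gW x0 x1) (gW' x0 x1) 1
  have hd := gram_det x0 x1
  rw [one_kronecker_one, mul_one] at h1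
  rw [gramT, h1]
  rw [h1, det_mul] at hd
  rw [← hd] at h
  have hB : IsUnit (gB x0 x1).det := isUnit_iff_ne_zero.2 (left_ne_zero_of_mul h)
  have hB' := isUnit_iff_ne_zero.2 (right_ne_zero_of_mul h)
  refine ⟨hB, ?_⟩
  rw [Matrix.mul_inv_rev, Matrix.mul_assoc (_ * _), Matrix.mul_nonsing_inv_cancel_left _ _ hB']
  rfl

/-- hypothesis: traces of short words are bounded -/
theorem word_conj_bd (hR : ∀ i, 2 ≤ R i) (x : I → Fin 4 → Matrix (Fin n) (Fin n) ℂ)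
    (htr : ∀ i l, l ≠ [] → l.length ≤ 4 * n + 3 → (∃ m, m ∉ l) → ‖trace (wd (x i) l)‖ ≤ R i)
    (hf : ∀ i, 1 ≤ ‖fk (x i 0) (x i 1)‖) (l : List (Fin 4)) :
    BdM R (fun i => gB (x i 0) (x i 1) * ((1 : Matrix (Fin n) (Fin n) ℂ) ⊗ₖ wd (x i) l) *
      (gB (x i 0) (x i 1))⁻¹) := by
  have hne : ∀ i, fk (x i 0) (x i 1) ≠ 0 := fun i h => by
    have := hf i; rw [h, norm_zero] at this; norm_num at this
  have hu : ∀ i, IsUnit (gB (x i 0) (x i 1)).det := fun i => (gram_conj _ _ 1 (hne i)).1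
  have htr' : ∀ l : List (Fin 4), l.length ≤ 4 * n + 3 → (∃ m, m ∉ l) →
      BdP R (fun i => trace (wd (x i) l)) := by
    intro l h1 h2
    by_cases hl : l = []
    · subst hl
      exact BdP.const hR (trace (1 : Matrix (Fin n) (Fin n) ℂ))
    · exact ⟨1, fun i => by simpa using htr i l hl h1 h2⟩
  have hlet : ∀ m, BdM R (fun i => gB (x i 0) (x i 1) *
      ((1 : Matrix (Fin n) (Fin n) ℂ) ⊗ₖ x i m) * (gB (x i 0) (x i 1))⁻¹) := by
    intro m
    obtain ⟨m', hm'⟩ : ∃ m' : Fin 4, m' ≠ 0 ∧ m' ≠ 1 ∧ m' ≠ m := by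
      revert m; decide
    have hT : BdM R (fun i => of fun p q =>
        trace (gW (x i 0) (x i 1) p * x i m * gW' (x i 0) (x i 1) q)) := by
      intro p q
      have := htr' (List.replicate p.1.1 0 ++ [1] ++ List.replicate p.2.1 0 ++ [m] ++
        (List.replicate q.2.1 0 ++ [1] ++ List.replicate q.1.1 0)) (by simp; omega)
        ⟨m', by simp [List.mem_replicate, hm'.1, hm'.2.1, hm'.2.2]⟩
      simpa only [wd_append, wd_rep, wd_single, gW, gW', of_apply] using this
    have hG : BdM R (fun i => of fun p q =>
        trace (gW (x i 0) (x i 1) p * 1 * gW' (x i 0) (x i 1) q)) := by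
      intro p q
      have := htr' (List.replicate p.1.1 0 ++ [1] ++ List.replicate p.2.1 0 ++
        (List.replicate q.2.1 0 ++ [1] ++ List.replicate q.1.1 0)) (by simp; omega)
        ⟨m', by simp [List.mem_replicate, hm'.1, hm'.2.1, hm'.2.2]⟩
      simpa only [wd_append, wd_rep, wd_single, gW, gW', of_apply, mul_one] using this
    have := BdM.mul hR hT (BdM.inv hR hG (BdP.inv_of_one_le hR fun i => by
      rw [gram_det]; exact hf i))
    simpa only [fun i => (gram_conj _ _ (x i m) (hne i)).2] using this
  induction l with
  | nil =>
    have e : ∀ i, gB (x i 0) (x i 1) * ((1 : Matrix (Fin n) (Fin n) ℂ) ⊗ₖ wd (x i) []) *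
      (gB (x i 0) (x i 1))⁻¹ = 1 := fun i => by
      simp only [wd, List.map_nil, List.prod_nil, one_kronecker_one, mul_one]
      exact Matrix.mul_nonsing_inv _ (hu i)
    simp only [e]
    exact BdM.one hR
  | cons m l ih =>
    have e : ∀ i, gB (x i 0) (x i 1) * ((1 : Matrix (Fin n) (Fin n) ℂ) ⊗ₖ wd (x i) (m :: l)) *
      (gB (x i 0) (x i 1))⁻¹ = (gB (x i 0) (x i 1) *
      ((1 : Matrix (Fin n) (Fin n) ℂ) ⊗ₖ x i m) * (gB (x i 0) (x i 1))⁻¹) *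
      (gB (x i 0) (x i 1) * ((1 : Matrix (Fin n) (Fin n) ℂ) ⊗ₖ wd (x i) l) *
      (gB (x i 0) (x i 1))⁻¹) := fun i => by
      have h1 : wd (x i) (m :: l) = x i m * wd (x i) l := by simp [wd]
      rw [h1]
      conv_lhs => rw [← mul_one (1 : Matrix (Fin n) (Fin n) ℂ)]
      rw [mul_kronecker_mul]
      simp only [Matrix.mul_assoc]
      rw [Matrix.nonsing_inv_mul_cancel_left _ _ (hu i)]
    simp only [e]
    exact BdM.mul hR (hlet m) ih

theorem word_trace_bd (hn : 2 ≤ n) (hR : ∀ i, 2 ≤ R i)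
    (x : I → Fin 4 → Matrix (Fin n) (Fin n) ℂ)
    (htr : ∀ i l, l ≠ [] → l.length ≤ 4 * n + 3 → (∃ m, m ∉ l) → ‖trace (wd (x i) l)‖ ≤ R i)
    (hf : ∀ i, 1 ≤ ‖fk (x i 0) (x i 1)‖) (l : List (Fin 4)) :
    BdP R (fun i => trace (wd (x i) l)) := by
  have hne : ∀ i, fk (x i 0) (x i 1) ≠ 0 := fun i h => by
    have := hf i; rw [h, norm_zero] at this; norm_num at this
  have hu : ∀ i, IsUnit (gB (x i 0) (x i 1)).det := fun i => (gram_conj _ _ 1 (hne i)).1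
  have h := BdP.mul (BdP.const hR ((n : ℂ)⁻¹)) (BdM.trace hR (word_conj_bd hR x htr hf l))
  have e : ∀ i, (n : ℂ)⁻¹ * trace (gB (x i 0) (x i 1) * ((1 : Matrix (Fin n) (Fin n) ℂ) ⊗ₖ
      wd (x i) l) * (gB (x i 0) (x i 1))⁻¹) = trace (wd (x i) l) := fun i => by
    rw [Matrix.trace_mul_cycle, Matrix.nonsing_inv_mul _ (hu i), one_mul, trace_kronecker,
      trace_one, Fintype.card_fin, ← mul_assoc, inv_mul_cancel₀ (by norm_cast; omega), one_mul]
  simpa only [e] using h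

theorem word_eig_bd (hR : ∀ i, 2 ≤ R i) (x : I → Fin 4 → Matrix (Fin n) (Fin n) ℂ)
    (htr : ∀ i l, l ≠ [] → l.length ≤ 4 * n + 3 → (∃ m, m ∉ l) → ‖trace (wd (x i) l)‖ ≤ R i)
    (hf : ∀ i, 1 ≤ ‖fk (x i 0) (x i 1)‖) (l : List (Fin 4))
    (Q Qi : I → Matrix (Fin n) (Fin n) ℂ) (lam : I → Fin n → ℂ) (hQ : ∀ i, Qi i * Q i = 1)
    (hw : ∀ i, wd (x i) l = Q i * diagonal (lam i) * Qi i) (j : Fin n) :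
    BdP R (fun i => lam i j) := by
  have hne : ∀ i, fk (x i 0) (x i 1) ≠ 0 := fun i h => by
    have := hf i; rw [h, norm_zero] at this; norm_num at this
  have hu : ∀ i, IsUnit (gB (x i 0) (x i 1)).det := fun i => (gram_conj _ _ 1 (hne i)).1
  have h := word_conj_bd hR x htr hf l
  refine BdP.of_le _ ?_ (fun i => eig_bound
    (gB (x i 0) (x i 1) * ((1 : Matrix (Fin n) (Fin n) ℂ) ⊗ₖ
      wd (x i) l) * (gB (x i 0) (x i 1))⁻¹)
    (gB (x i 0) (x i 1) * ((1 : Matrix (Fin n) (Fin n) ℂ) ⊗ₖ Q i)) (((1 : Matrix (Fin n) (Fin n) ℂ) ⊗ₖ Qi i) * (gB (x i 0) (x i 1))⁻¹)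
    (fun p => lam i p.2) ?_ ?_ (j, j))
  · have := BdP.sum hR Finset.univ _ fun a _ => BdP.sum hR Finset.univ _ fun b _ =>
      BdP.norm (h a b)
    simpa only [Complex.ofReal_sum] using this
  · rw [Matrix.mul_assoc, Matrix.nonsing_inv_mul_cancel_left _ _ (hu i), ← mul_kronecker_mul,
      hQ, one_mul, one_kronecker_one]
  · have e : (diagonal fun p : Fin n × Fin n => lam i p.2) =
        (1 : Matrix (Fin n) (Fin n) ℂ) ⊗ₖ diagonal (lam i) := by
      rw [← diagonal_one, diagonal_kronecker_diagonal]
      simp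
    rw [e, hw]
    have : (1 : Matrix (Fin n) (Fin n) ℂ) ⊗ₖ (Q i * diagonal (lam i) * Qi i) =
      ((1 : Matrix (Fin n) (Fin n) ℂ) ⊗ₖ Q i) * ((1 : Matrix (Fin n) (Fin n) ℂ) ⊗ₖ
        diagonal (lam i)) * ((1 : Matrix (Fin n) (Fin n) ℂ) ⊗ₖ Qi i) := by
      rw [← mul_kronecker_mul, ← mul_kronecker_mul, one_mul, one_mul]
    rw [this]
    simp only [Matrix.mul_assoc]

end


section
open Matrix
open scoped Kronecker
variable {I : Type*} {R : I → ℝ} {n : ℕ}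

theorem extr1 {V W : Matrix (Fin n) (Fin n) ℂ} (h : V * W = 1) (f : Fin n → ℂ) (q : Fin n) :
    ∑ a, (∑ i, V i a * f i) * W a q = f q := by
  have h1 : (f ᵥ* V) ᵥ* W = f := by rw [vecMul_vecMul, h, vecMul_one]
  have h2 := congrFun h1 q
  rw [← h2]
  simp only [vecMul, dotProduct]
  refine Finset.sum_congr rfl fun a _ => ?_
  congr 1
  exact Finset.sum_congr rfl fun i _ => mul_comm _ _

theorem extr2 {V W : Matrix (Fin n) (Fin n) ℂ} (h : V * W = 1) (f : Fin n → Fin n → ℂ)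
    (p q : Fin n) :
    ∑ b, (∑ a, (∑ i, ∑ j, V i a * V j b * f i j) * W a p) * W b q = f p q := by
  rw [← extr1 h (f p) q]
  refine Finset.sum_congr rfl fun b _ => ?_
  congr 1
  rw [← extr1 h (fun p => ∑ j, V j b * f p j) p]
  refine Finset.sum_congr rfl fun a _ => ?_
  congr 1
  refine Finset.sum_congr rfl fun i _ => ?_
  rw [Finset.mul_sum]
  exact Finset.sum_congr rfl fun i _ => by ring

theorem extr3 {V W : Matrix (Fin n) (Fin n) ℂ} (h : V * W = 1) (f : Fin n → Fin n → Fin n → ℂ)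
    (p q r : Fin n) :
    ∑ c, (∑ b, (∑ a, (∑ i, ∑ k, ∑ j, V i a * V j b * V k c * f i j k) * W a p) * W b q) * W c r
      = f p q r := by
  rw [← extr1 h (f p q) r]
  refine Finset.sum_congr rfl fun c _ => ?_
  congr 1
  rw [← extr2 h (fun p q => ∑ k, V k c * f p q k) p q]
  refine Finset.sum_congr rfl fun b _ => ?_
  congr 1
  refine Finset.sum_congr rfl fun a _ => ?_
  congr 1
  refine Finset.sum_congr rfl fun i _ => ?_
  rw [Finset.sum_comm]
  refine Finset.sum_congr rfl fun j _ => ?_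
  rw [Finset.mul_sum]
  exact Finset.sum_congr rfl fun i _ => by ring

theorem step2 (hR : ∀ i, 2 ≤ R i) (lam : I → Fin n → ℂ) (D : I → Matrix (Fin n) (Fin n) ℂ)
    (z : Fin n) (hlam : ∀ j, BdP R (fun i => lam i j))
    (ht1 : ∀ a : ℕ, BdP R (fun i => trace (diagonal (lam i) ^ a * D i)))
    (ht2 : ∀ a b : ℕ, BdP R (fun i => trace (diagonal (lam i) ^ a * D i *
      diagonal (lam i) ^ b * D i)))
    (ht3 : ∀ a b c : ℕ, BdP R (fun i => trace (diagonal (lam i) ^ a * D i *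
      diagonal (lam i) ^ b * D i * diagonal (lam i) ^ c * D i)))
    (hhk : ∀ i, 1 ≤ ‖hk (diagonal (lam i))‖) (hfk : ∀ i, 1 ≤ ‖fk (diagonal (lam i)) (D i)‖)
    (hgk : ∀ k i, 1 ≤ ‖gk k (diagonal (lam i)) (D i)‖)
    (hz : ∀ i j, j ≠ z → D i z j = 1) :
    BdM R D ∧ (∀ p q, BdP R (fun i => (D i p q)⁻¹)) ∧ ∀ T : Finset (Fin n),
      BdP R (fun i => ((D i).submatrix (Subtype.val : T → Fin n) (Subtype.val : T → Fin n)).det⁻¹)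
      := by
  have hV : BdM R (fun i => vandermonde (lam i)) := by
    intro p q
    simp only [vandermonde_apply]
    exact BdP.pow hR (hlam p) _
  have hVd := BdM.det hR hV
  have hVi : BdP R (fun i => (vandermonde (lam i)).det⁻¹) := by
    refine BdP.inv_of_mul hVd fun i => ?_
    have := hhk i
    rwa [hk_diag, pow_two] at this
  have hW := BdM.inv hR hV hVi
  have hVne : ∀ i, (vandermonde (lam i)).det ≠ 0 := fun i h => by
    have := hhk i
    rw [hk_diag, h] at this; norm_num at this
  have hVW : ∀ i, vandermonde (lam i) * (vandermonde (lam i))⁻¹ = 1 := fun i =>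
    Matrix.mul_nonsing_inv _ (isUnit_iff_ne_zero.2 (hVne i))
  -- cycles
  have hc1 : ∀ p, BdP R (fun i => D i p p) := by
    intro p
    have := BdP.sum hR Finset.univ _ fun (a : Fin n) _ => BdP.mul (ht1 a) (hW a p)
    simp only [trace_diag1] at this
    exact (funext fun i => extr1 (hVW i) (fun p => D i p p) p) ▸ this
  have hc2 : ∀ p q, BdP R (fun i => D i p q * D i q p) := by
    intro p q
    have := BdP.sum hR Finset.univ _ fun (b : Fin n) _ => BdP.mul
      (BdP.sum hR Finset.univ _ fun (a : Fin n) _ => BdP.mul (ht2 a b) (hW a p)) (hW b q)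
    simp only [trace_diag2] at this
    exact (funext fun i => extr2 (hVW i) (fun p q => D i p q * D i q p) p q) ▸ this
  have hc3 : ∀ p q r, BdP R (fun i => D i p q * D i q r * D i r p) := by
    intro p q r
    have := BdP.sum hR Finset.univ _ fun (c : Fin n) _ => BdP.mul
      (BdP.sum hR Finset.univ _ fun (b : Fin n) _ => BdP.mul
      (BdP.sum hR Finset.univ _ fun (a : Fin n) _ => BdP.mul (ht3 a b c) (hW a p)) (hW b q))
      (hW c r)
    simp only [trace_diag3] at this
    exact (funext fun i => extr3 (hVW i) (fun p q r => D i p q * D i q r * D i r p) p q r) ▸ this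
  have hVV : BdP R (fun i => (vandermonde (lam i) ⊗ₖ vandermonde (lam i)).det ^ 2) := by
    simp only [det_kronecker]
    exact BdP.pow hR (BdP.mul (BdP.pow hR hVd _) (BdP.pow hR hVd _)) _
  have hc2i : ∀ p q, BdP R (fun i => (D i p q * D i q p)⁻¹) := by
    intro p q
    refine BdP.inv_of_prod hR Finset.univ (fun (p : Fin n × Fin n) i => D i p.1 p.2 * D i p.2 p.1)
      _ (fun p _ => hc2 p.1 p.2) hVV (fun i => ?_) (p, q) (Finset.mem_univ _)
    have := hfk i
    rwa [fk_diag] at this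
  have hz' : ∀ q, q ≠ z → BdP R (fun i => D i q z) ∧ BdP R (fun i => (D i q z)⁻¹) := by
    intro q hq
    have h1 := hc2 z q
    have h2 := hc2i z q
    simp only [hz _ q hq, one_mul] at h1 h2
    exact ⟨h1, h2⟩
  have hne : ∀ i p q, D i p q ≠ 0 := by
    intro i p q h0
    have := hfk i
    rw [fk_diag, Finset.prod_eq_zero (Finset.mem_univ (p, q)) (by simp [h0])] at this
    norm_num at this
  have hD : BdM R D := by
    intro p q
    by_cases hpq : p = q
    · subst hpq; exact hc1 p
    by_cases hp : p = z
    · subst hp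
      simp only [hz _ q (Ne.symm hpq)]
      exact BdP.const hR 1
    by_cases hq : q = z
    · subst hq; exact (hz' p hp).1
    have := BdP.mul (hc3 z p q) (hz' q hq).2
    simp only [hz _ p hp, one_mul] at this
    simpa only [mul_assoc, mul_inv_cancel₀ (hne _ q z), mul_one] using this
  refine ⟨hD, ?_, ?_⟩
  · intro p q
    refine BdP.inv_of_prod hR Finset.univ (fun (p : Fin n × Fin n) i => D i p.1 p.2)
      (fun i => (vandermonde (lam i) ⊗ₖ vandermonde (lam i)).det ^ 2 *
        ∏ p : Fin n × Fin n, D i p.2 p.1) (fun p _ => hD p.1 p.2)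
      (BdP.mul hVV (BdP.prod hR _ _ fun p _ => hD p.2 p.1)) (fun i => ?_) (p, q)
      (Finset.mem_univ _)
    have := hfk i
    rw [fk_diag, Finset.prod_mul_distrib] at this
    rwa [mul_assoc, mul_comm (∏ p : Fin n × Fin n, D i p.2 p.1)]
  · intro T
    have hTm : T ∈ (Finset.univ.powersetCard T.card : Finset (Finset (Fin n))) := by
      simp [Finset.mem_powersetCard]
    set e := (Finset.equivFin (Finset.univ.powersetCard T.card : Finset (Finset (Fin n)))).symm
      with he
    have hm : ∀ S : Finset (Fin n), BdP R (fun i => ((D i).submatrix (Subtype.val : S → Fin n)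
        (Subtype.val : S → Fin n)).det) := fun S =>
      BdM.det hR (M := fun i => (D i).submatrix (Subtype.val : S → Fin n)
        (Subtype.val : S → Fin n)) fun a b => hD a.1 b.1
    have := BdP.inv_of_prod hR Finset.univ (fun j i => ((D i).submatrix
      (Subtype.val : (e j).1 → Fin n) (Subtype.val : (e j).1 → Fin n)).det)
      (fun i => (vandermonde (fun j => ∏ k ∈ (e j).1, lam i k)).det ^ 2)
      (fun j _ => hm _) ?_ (fun i => ?_) (e.symm ⟨T, hTm⟩) (Finset.mem_univ _)
    · rw [Equiv.apply_symm_apply] at this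
      exact this
    · refine BdP.pow hR (BdM.det hR fun p q => ?_) 2
      simp only [vandermonde_apply]
      exact BdP.pow hR (BdP.prod hR _ _ fun k _ => hlam k) _
    · have := hgk T.card i
      rwa [gk_diag T.card _ _ e] at this

theorem BdM.uniform {a b : Type*} [Finite a] [Finite b] (hR : ∀ i, 2 ≤ R i)
    {M : I → Matrix a b ℂ} (h : BdM R M) : ∃ C : ℕ, ∀ C' ≥ C, ∀ i p q, ‖M i p q‖ ≤ R i ^ C' := by
  cases nonempty_fintype a
  cases nonempty_fintype b
  choose C hC using h
  refine ⟨∑ p, ∑ q, C p q, fun C' hC' i p q => (hC p q i).trans ?_⟩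
  refine pow_le_pow_right₀ (by linarith [hR i]) (le_trans ?_ hC')
  refine le_trans ?_ (Finset.single_le_sum (f := fun p => ∑ q, C p q)
    (fun p _ => Nat.zero_le _) (Finset.mem_univ p))
  exact Finset.single_le_sum (f := fun q => C p q)
    (fun p _ => Nat.zero_le _) (Finset.mem_univ q)

theorem freeSemi_of_map {H H' : Type*} [Monoid H] [Monoid H'] (f : H →* H') {a b : H}
    (h : FreeSemi (f a) (f b)) : FreeSemi a b := by
  intro l l' hl hp
  refine h l l' hl ?_
  have := congrArg f hp
  rw [map_list_prod, map_list_prod, List.map_map, List.map_map] at this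
  have e : (f ∘ fun c => bif c then a else b) = fun c => bif c then f a else f b := by
    ext c; cases c <;> rfl
  rwa [e] at this

/-- The main uniform statement. -/
theorem step3 (hn : 2 ≤ n) (hR : ∀ i, 2 ≤ R i) (x : I → Fin 4 → Matrix (Fin n) (Fin n) ℂ)
    (htr : ∀ i l, l ≠ [] → l.length ≤ 4 * n + 3 → (∃ m, m ∉ l) → ‖trace (wd (x i) l)‖ ≤ R i)
    (hf : ∀ i, 1 ≤ ‖fk (x i 0) (x i 1)‖) (w : List (Fin 4)) (m : Fin 4)
    (hhk : ∀ i, 1 ≤ ‖hk (wd (x i) w)‖) (hfk : ∀ i, 1 ≤ ‖fk (wd (x i) w) (x i m)‖)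
    (hgk : ∀ k i, 1 ≤ ‖gk k (wd (x i) w) (x i m)‖)
    (Q Qi : I → Matrix (Fin n) (Fin n) ℂ) (lam : I → Fin n → ℂ) (hQ : ∀ i, Qi i * Q i = 1)
    (hw : ∀ i, wd (x i) w = Q i * diagonal (lam i) * Qi i)
    (hlam0 : ∀ i j, lam i j ≠ 0) (hxu : ∀ i, IsUnit (x i m)) (z : Fin n)
    (hz : ∀ i j, j ≠ z → (Qi i * x i m * Q i) z j = 1)
    (T : Finset (Fin n)) (hT : T.Nonempty) (hT' : ∃ j, j ∉ T)
    (hgap : ∀ i j k, j ∉ T → k ∈ T → R i * ‖lam i j‖ ^ (2 * n) ≤ ‖lam i k‖ ^ (2 * n)) :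
    ∃ K : ℕ, ∀ i, FreeSemi (wd (x i) w ^ K) (x i m * wd (x i) w ^ K) := by
  have hQ' : ∀ i, Q i * Qi i = 1 := fun i => mul_eq_one_comm.1 (hQ i)
  set D : I → Matrix (Fin n) (Fin n) ℂ := fun i => Qi i * x i m * Q i with hDdef
  have hx : ∀ i, x i m = Q i * D i * Qi i := fun i => by
    simp only [hDdef]
    rw [Matrix.mul_assoc (Qi i), ← Matrix.mul_assoc (Q i), hQ', one_mul, Matrix.mul_assoc, hQ',
      mul_one]
  have hlam := word_eig_bd hR x htr hf w Q Qi lam hQ hw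
  have htw := word_trace_bd hn hR x htr hf
  have hrep : ∀ i (a : ℕ), wd (x i) (List.replicate a w).flatten = wd (x i) w ^ a := by
    intro i a
    induction a with
    | zero => simp [wd]
    | succ a ih => rw [List.replicate_succ, List.flatten_cons, wd_append, ih, pow_succ']
  have hpw : ∀ i (a : ℕ), wd (x i) w ^ a = Q i * diagonal (lam i) ^ a * Qi i := fun i a => by
    rw [hw, conj_pow_mat (hQ i) _ _ (hQ' i)]
  obtain ⟨hD, hDi, hDT⟩ := step2 hR lam D z hlam
    (fun a => by
      have := htw ((List.replicate a w).flatten ++ [m])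
      simpa only [wd_append, wd_single, hrep, hpw, hx, conj_mul' (hQ _), trace_conj' (hQ _)]
        using this)
    (fun a b => by
      have := htw ((List.replicate a w).flatten ++ [m] ++ (List.replicate b w).flatten ++ [m])
      simpa only [wd_append, wd_single, hrep, hpw, hx, conj_mul' (hQ _), trace_conj' (hQ _)]
        using this)
    (fun a b c => by
      have := htw ((List.replicate a w).flatten ++ [m] ++ (List.replicate b w).flatten ++ [m] ++
        (List.replicate c w).flatten ++ [m])
      simpa only [wd_append, wd_single, hrep, hpw, hx, conj_mul' (hQ _), trace_conj' (hQ _)]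
        using this)
    (fun i => by have := hhk i; rwa [hw, hk_conj (hQ i) (hQ' i)] at this)
    (fun i => by have := hfk i; rwa [hw, hx, fk_conj (hQ i) (hQ' i)] at this)
    (fun k i => by have := hgk k i; rwa [hw, hx, gk_conj (hQ i) (hQ' i)] at this) hz
  have hα : BdM R (fun i => (D i).submatrix (Subtype.val : T → Fin n) (Subtype.val : T → Fin n)) :=
    fun a b => hD a.1 b.1
  obtain ⟨C1, hC1⟩ := hD.uniform hR
  obtain ⟨C2, hC2⟩ := (BdM.inv hR hα (hDT T)).uniform hR
  obtain ⟨C3, hC3⟩ := (show BdM R (fun i => of fun p q => (D i p q)⁻¹) from hDi).uniform hR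
  obtain ⟨C4, hC4⟩ := (BdP.const hR (2 * n : ℂ) : BdP R _)
  set C := C1 + C2 + C3 + C4 with hC
  have hDne : ∀ i p q, D i p q ≠ 0 := by
    intro i p q h0
    have := hfk i
    rw [hw, hx, fk_conj (hQ i) (hQ' i), fk_diag, Finset.prod_eq_zero (Finset.mem_univ (p, q))
      (by simp [h0])] at this
    norm_num at this
  have hαne : ∀ i, ((D i).submatrix (Subtype.val : T → Fin n) (Subtype.val : T → Fin n)).det ≠ 0 := by
    intro i h0
    have hTm : T ∈ (Finset.univ.powersetCard T.card : Finset (Finset (Fin n))) := by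
      simp [Finset.mem_powersetCard]
    have := hgk T.card i
    set e := (Finset.equivFin (Finset.univ.powersetCard T.card : Finset (Finset (Fin n)))).symm
      with he
    rw [hw, hx, gk_conj (hQ i) (hQ' i), gk_diag T.card _ _ e,
      Finset.prod_eq_zero (Finset.mem_univ (e.symm ⟨T, hTm⟩))
      (by rw [Equiv.apply_symm_apply]; exact h0)] at this
    norm_num at this
  refine ⟨2 * n * (10 * C), fun i => ?_⟩
  have hpp := pp_main hn T hT hT' (D i) ?_ _
    (Matrix.mul_nonsing_inv _ (isUnit_iff_ne_zero.2 (hαne i))) (R i ^ C) ?_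
    (hC1 C (by omega) i) (hC2 C (by omega) i) ?_ (fun j => lam i j ^ (2 * n * (10 * C)))
    (fun j => pow_ne_zero _ (hlam0 i j)) ?_
  · have e1 : wd (x i) w ^ (2 * n * (10 * C)) =
        Q i * diagonal (fun j => lam i j ^ (2 * n * (10 * C))) * Qi i := by
      rw [hpw, diagonal_pow]; rfl
    have e2 : x i m * wd (x i) w ^ (2 * n * (10 * C)) =
        Q i * (D i * diagonal (fun j => lam i j ^ (2 * n * (10 * C)))) * Qi i := by
      rw [e1, hx, conj_mul' (hQ i)]
    let f : Matrix (Fin n) (Fin n) ℂ →* Matrix (Fin n) (Fin n) ℂ :=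
      { toFun := fun A => Qi i * A * Q i
        map_one' := by rw [mul_one, hQ]
        map_mul' := fun A B => (conj_mul' (hQ' i) A B).symm }
    have hff : ∀ A, f (Q i * A * Qi i) = A := fun A => by
      change Qi i * (Q i * A * Qi i) * Q i = A
      rw [Matrix.mul_assoc, Matrix.mul_assoc, hQ, mul_one, ← Matrix.mul_assoc, hQ, one_mul]
    refine freeSemi_of_map f ?_
    rw [e2, e1, hff, hff]
    exact hpp
  · have h1 : IsUnit (Q i) := ⟨⟨Q i, Qi i, hQ' i, hQ i⟩, rfl⟩
    have h2 : IsUnit (Qi i) := ⟨⟨Qi i, Q i, hQ i, hQ' i⟩, rfl⟩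
    exact (h2.mul (hxu i)).mul h1
  · have := hC4 i
    have h2 : ‖(2 * n : ℂ)‖ = 2 * n := by simp
    rw [h2] at this
    exact this.trans (pow_le_pow_right₀ (by linarith [hR i]) (by omega))
  · intro j k _ _
    have := hC3 C (by omega) i j k
    rw [of_apply, norm_inv, inv_le_iff_one_le_mul₀ (norm_pos_iff.2 (hDne i j k))] at this
    exact this
  · intro j k hj hk
    have := pow_le_pow_left₀ (by have := hR i; positivity) (hgap i j k hj hk) (10 * C)
    rw [norm_pow, norm_pow, pow_mul ‖lam i j‖, pow_mul ‖lam i k‖]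
    refine le_trans (le_of_eq ?_) this
    rw [mul_pow, mul_comm, mul_comm 10 C, pow_mul (R i)]

end


section
open Matrix
variable {n : ℕ}

theorem trace_zero_of_repeated (A : Matrix (Fin n) (Fin n) ℂ) (r : ℂ) (q : Polynomial ℂ)
    (h : A.charpoly = (Polynomial.X - Polynomial.C r) ^ 2 * q) (b : ℕ) :
    trace (Polynomial.aeval A ((Polynomial.X - Polynomial.C r) * q) * A ^ b) = 0 := by
  have h1 : IsNilpotent (Polynomial.aeval A ((Polynomial.X - Polynomial.C r) * q) * A ^ b) := by
    refine ⟨2, ?_⟩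
    have e : A ^ b = Polynomial.aeval A (Polynomial.X ^ b : Polynomial ℂ) := by simp
    rw [e, ← map_mul, ← map_pow]
    have : ((Polynomial.X - Polynomial.C r) * q * Polynomial.X ^ b) ^ 2 =
        A.charpoly * (q * (Polynomial.X ^ b) ^ 2) := by rw [h]; ring
    rw [this, map_mul, Matrix.aeval_self_charpoly, zero_mul]
  exact (Matrix.isNilpotent_trace_of_isNilpotent h1).eq_zero

theorem charpoly_roots_nodup (A : Matrix (Fin n) (Fin n) ℂ) (h : hk A ≠ 0) :
    A.charpoly.roots.Nodup := by
  rw [Multiset.nodup_iff_count_le_one]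
  intro r
  by_contra hr
  rw [Polynomial.count_roots] at hr
  have hp0 : A.charpoly ≠ 0 := A.charpoly_monic.ne_zero
  have h2 : (Polynomial.X - Polynomial.C r) ^ 2 ∣ A.charpoly :=
    (Polynomial.le_rootMultiplicity_iff hp0).1 (by omega)
  obtain ⟨q, hq⟩ := h2
  set f := (Polynomial.X - Polynomial.C r) * q with hf
  have hq0 : q ≠ 0 := by rintro rfl; simp at hq; exact hp0 hq
  have hf0 : f ≠ 0 := mul_ne_zero (Polynomial.X_sub_C_ne_zero r) hq0
  have hdeg : f.natDegree < n := by
    have h3 : A.charpoly.natDegree = n := by simp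
    have h4 : A.charpoly = (Polynomial.X - Polynomial.C r) * f := by rw [hq, hf]; ring
    rw [h4, Polynomial.natDegree_mul (Polynomial.X_sub_C_ne_zero r) hf0,
      Polynomial.natDegree_X_sub_C] at h3
    omega
  apply h
  rw [hk]
  refine Matrix.exists_vecMul_eq_zero_iff.1 ⟨fun a : Fin n => f.coeff a, ?_, ?_⟩
  · intro h0
    apply hf0
    ext k
    by_cases hk : k < n
    · exact congrFun h0 ⟨k, hk⟩
    · simp [Polynomial.coeff_eq_zero_of_natDegree_lt (show f.natDegree < k by omega)]
  · ext b
    have := trace_zero_of_repeated A r q hq b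
    rw [← hf, Polynomial.aeval_eq_sum_range' hdeg, Finset.sum_mul, trace_sum,
      Finset.sum_range] at this
    rw [Pi.zero_apply, ← this]
    simp only [vecMul, dotProduct, of_apply]
    refine Finset.sum_congr rfl fun a _ => ?_
    rw [Matrix.smul_mul, trace_smul, ← pow_add, smul_eq_mul]

theorem exists_diag (A : Matrix (Fin n) (Fin n) ℂ) (h : hk A ≠ 0) :
    ∃ (Q Qi : Matrix (Fin n) (Fin n) ℂ) (l : Fin n → ℂ), Qi * Q = 1 ∧ A = Q * diagonal l * Qi := by
  have hnd := charpoly_roots_nodup A h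
  have hcard : A.charpoly.roots.toFinset.card = n := by
    rw [Multiset.toFinset_card_of_nodup hnd]
    have := (IsAlgClosed.splits A.charpoly).natDegree_eq_card_roots
    rw [← this]; simp
  let e := (Finset.equivFinOfCardEq hcard).symm
  let l : Fin n → ℂ := fun j => (e j).1
  have hl : Function.Injective l := fun i j hij => e.injective (Subtype.ext hij)
  have hv : ∀ j, ∃ v : Fin n → ℂ, v ≠ 0 ∧ A *ᵥ v = l j • v := by
    intro j
    have h1 : (e j).1 ∈ A.charpoly.roots := Multiset.mem_toFinset.1 (e j).2
    have h2 := (Polynomial.mem_roots'.1 h1).2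
    rw [Polynomial.IsRoot, Matrix.eval_charpoly] at h2
    obtain ⟨v, hv0, hv⟩ := Matrix.exists_mulVec_eq_zero_iff.2 h2
    refine ⟨v, hv0, ?_⟩
    rw [Matrix.sub_mulVec, sub_eq_zero] at hv
    rw [← hv]
    ext i
    simp [l, Matrix.mulVec, dotProduct, Matrix.scalar, diagonal_apply]
  choose v hv0 hv using hv
  have hli : LinearIndependent ℂ v :=
    Module.End.eigenvectors_linearIndependent' (Matrix.toLin' A) l hl v
      (fun j => ⟨Module.End.mem_eigenspace_iff.2 (by simpa using hv j), hv0 j⟩)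
  let Q : Matrix (Fin n) (Fin n) ℂ := (of v)ᵀ
  have hQ : IsUnit Q := by
    rw [← Matrix.linearIndependent_cols_iff_isUnit]
    exact hli
  have hQd : IsUnit Q.det := (Matrix.isUnit_iff_isUnit_det _).1 hQ
  refine ⟨Q, Q⁻¹, l, Matrix.nonsing_inv_mul _ hQd, ?_⟩
  have : A * Q = Q * diagonal l := by
    ext i j
    rw [mul_diagonal]
    have := congrFun (hv j) i
    simp only [Pi.smul_apply, smul_eq_mul] at this
    rw [mul_comm, show Q i j = v j i from rfl, ← this]
    rfl
  rw [← this, Matrix.mul_nonsing_inv_cancel_right _ _ hQd]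

theorem exists_diag_norm (A D : Matrix (Fin n) (Fin n) ℂ) (h : hk A ≠ 0) (hf : fk A D ≠ 0)
    (z : Fin n) :
    ∃ (Q Qi : Matrix (Fin n) (Fin n) ℂ) (l : Fin n → ℂ), Qi * Q = 1 ∧ A = Q * diagonal l * Qi ∧
      ∀ j, j ≠ z → (Qi * D * Q) z j = 1 := by
  obtain ⟨Q, Qi, l, hQ, hA⟩ := exists_diag A h
  have hQ' : Q * Qi = 1 := mul_eq_one_comm.1 hQ
  have hD : D = Q * (Qi * D * Q) * Qi := by
    rw [Matrix.mul_assoc Qi, ← Matrix.mul_assoc Q, hQ', one_mul, Matrix.mul_assoc, hQ',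
      mul_one]
  have hne : ∀ j, (Qi * D * Q) z j ≠ 0 := by
    intro j h0
    apply hf
    rw [hA, hD, fk_conj hQ hQ', fk_diag, Finset.prod_eq_zero (Finset.mem_univ (z, j))
      (by simp only [h0, zero_mul]), mul_zero]
  let s : Fin n → ℂ := fun j => if j = z then 1 else ((Qi * D * Q) z j)⁻¹
  have hs : ∀ j, s j ≠ 0 := by
    intro j
    simp only [s]
    split_ifs
    · exact one_ne_zero
    · exact inv_ne_zero (hne j)
  have hss : diagonal (fun j => (s j)⁻¹) * diagonal s = 1 := by
    rw [diagonal_mul_diagonal, ← diagonal_one]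
    congr 1; ext k
    exact inv_mul_cancel₀ (hs k)
  refine ⟨Q * diagonal s, diagonal (fun j => (s j)⁻¹) * Qi, l, ?_, ?_, ?_⟩
  · rw [Matrix.mul_assoc, ← Matrix.mul_assoc Qi, hQ, one_mul, hss]
  · have : diagonal s * diagonal l * diagonal (fun j => (s j)⁻¹) = diagonal l := by
      rw [diagonal_mul_diagonal, diagonal_mul_diagonal]
      congr 1; ext k
      have := hs k
      field_simp
    rw [hA]
    calc Q * diagonal l * Qi = Q * (diagonal s * diagonal l * diagonal (fun j => (s j)⁻¹)) * Qi :=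
          by rw [this]
      _ = _ := by simp only [Matrix.mul_assoc]
  · intro j hj
    have : diagonal (fun j => (s j)⁻¹) * Qi * D * (Q * diagonal s) =
        diagonal (fun j => (s j)⁻¹) * (Qi * D * Q) * diagonal s := by
      simp only [Matrix.mul_assoc]
    rw [this, mul_diagonal, diagonal_mul]
    simp only [s, if_true, if_neg hj, inv_one, one_mul]
    exact mul_inv_cancel₀ (hne j)

theorem exists_gap (hn : 2 ≤ n) (r : Fin n → ℝ) (hr : ∀ j, 0 < r j) (hprod : ∏ j, r j = 1) (R : ℝ)
    (hR : (n : ℝ) ^ 2 ≤ R) (hsum : R ≤ ∑ j, r j) :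
    ∃ T : Finset (Fin n), T.Nonempty ∧ (∃ j, j ∉ T) ∧
      ∀ j k, j ∉ T → k ∈ T → R * r j ^ (2 * n) ≤ r k ^ (2 * n) := by
  have hn0 : (2 : ℝ) ≤ n := by exact_mod_cast hn
  have hR4 : 4 ≤ R := by nlinarith
  have : Nonempty (Fin n) := ⟨⟨0, by omega⟩⟩
  obtain ⟨M, hM⟩ := Finite.exists_max r
  have hRM : R ≤ n * r M := by
    refine hsum.trans ((Finset.sum_le_sum fun j _ => hM j).trans ?_)
    simp
  by_contra hno
  push Not at hno
  set ρ : ℝ := R ^ ((2 * n : ℝ)⁻¹) with hρ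
  have hρn : ρ ^ (2 * n) = R := by
    rw [hρ, ← Real.rpow_natCast, ← Real.rpow_mul (by linarith)]
    push_cast
    rw [inv_mul_cancel₀ (by positivity), Real.rpow_one]
  have hρ1 : 1 < ρ := Real.one_lt_rpow (by linarith) (by positivity)
  have key : ∀ s : ℕ, s + 1 ≤ n → ∃ T : Finset (Fin n), T.card = s + 1 ∧
      ∀ k ∈ T, r M ≤ r k * ρ ^ s := by
    intro s
    induction s with
    | zero => intro _; exact ⟨{M}, by simp, by simp⟩
    | succ s ih =>
      intro hs
      obtain ⟨T, hT, hTk⟩ := ih (by omega)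
      have hex : ∃ j, j ∉ T := by
        by_contra hall
        push Not at hall
        have : T = Finset.univ := Finset.eq_univ_iff_forall.2 hall
        rw [this, Finset.card_univ, Fintype.card_fin] at hT
        omega
      obtain ⟨j, k, hj, hk, hjk⟩ := hno T (Finset.card_pos.1 (by omega)) hex
      refine ⟨insert j T, by rw [Finset.card_insert_of_notMem hj, hT], ?_⟩
      intro i hi
      rcases Finset.mem_insert.1 hi with rfl | hi
      · have h1 : r k < ρ * r i := by
          rw [← hρn, ← mul_pow] at hjk
          exact lt_of_pow_lt_pow_left₀ _ (by have := hr i; positivity) hjk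
        calc r M ≤ r k * ρ ^ s := hTk k hk
          _ ≤ ρ * r i * ρ ^ s := mul_le_mul_of_nonneg_right h1.le (by positivity)
          _ = _ := by ring
      · refine (hTk i hi).trans (mul_le_mul_of_nonneg_left ?_ (hr i).le)
        exact pow_le_pow_right₀ hρ1.le (by omega)
  obtain ⟨T, hT, hTk⟩ := key (n - 1) (by omega)
  have hTu : T = Finset.univ := Finset.eq_univ_of_card _ (by rw [hT, Fintype.card_fin]; omega)
  have hbig : ρ ^ n ≤ r M := by
    have h1 : (ρ ^ n) ^ 2 = R := by rw [← pow_mul, mul_comm, hρn]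
    have h0 : (n : ℝ) ≤ ρ ^ n := by
      refine le_of_sq_le_sq ?_ (by positivity)
      rw [h1]; exact hR
    have hp : 0 < ρ ^ n := by positivity
    have : ρ ^ n * ρ ^ n ≤ ρ ^ n * r M := by
      rw [← pow_two, h1]
      exact hRM.trans (mul_le_mul_of_nonneg_right h0 (hr M).le)
    exact le_of_mul_le_mul_left this hp
  have hall : ∀ k, 1 < r k := by
    intro k
    have h1 := hbig.trans (hTk k (hTu ▸ Finset.mem_univ k))
    obtain ⟨N, rfl⟩ : ∃ N, n = N + 1 := ⟨n - 1, by omega⟩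
    rw [Nat.add_sub_cancel, pow_succ, mul_comm] at h1
    have := le_of_mul_le_mul_right h1 (by positivity)
    linarith
  have : 1 < ∏ j, r j := by
    have := Finset.prod_lt_prod_of_nonempty (s := (Finset.univ : Finset (Fin n)))
      (f := fun _ => (1 : ℝ)) (g := r) (fun _ _ => one_pos) (fun k _ => hall k)
      Finset.univ_nonempty
    simpa using this
  linarith

end


section
open Matrix
variable {n : ℕ}

/-- the complexification of an integral invertible matrix -/
def toC (n : ℕ) : GL (Fin n) ℤ →* Matrix (Fin n) (Fin n) ℂ :=
  ((Int.castRingHom ℂ).mapMatrix (m := Fin n)).toMonoidHom.comp (Units.coeHom _)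

theorem toC_apply (g : GL (Fin n) ℤ) :
    toC n g = (g : Matrix (Fin n) (Fin n) ℤ).map (Int.castRingHom ℂ) := rfl

theorem toC_inj : Function.Injective (toC n) := by
  intro g h hgh
  apply Units.ext
  ext i j
  have := congrFun (congrFun hgh i) j
  simpa [toC_apply] using this

theorem toC_trace (g : GL (Fin n) ℤ) :
    ‖trace (toC n g)‖ = ((|trace (g : Matrix (Fin n) (Fin n) ℤ)| : ℤ) : ℝ) := by
  have : trace (toC n g) = ((trace (g : Matrix (Fin n) (Fin n) ℤ) : ℤ) : ℂ) := by
    rw [toC_apply]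
    exact (AddMonoidHom.map_trace (Int.castRingHom ℂ).toAddMonoidHom _).symm
  rw [this, Complex.norm_intCast, Int.cast_abs]

theorem one_le_norm_cast {k : ℤ} (h : k ≠ 0) : 1 ≤ ‖(Int.castRingHom ℂ) k‖ := by
  have : (1 : ℤ) ≤ |k| := Int.one_le_abs h
  rw [eq_intCast, Complex.norm_intCast]
  exact_mod_cast this

/-- the generic position condition for four letters -/
def Cond {n : ℕ} (x : Fin 4 → GL (Fin n) ℤ) : Prop :=
  (∀ (w : List (Fin 4)) (m : Fin 4), w ≠ [] → w.length ≤ 4 * n + 3 → m ∉ w →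
    Good (wd x w : GL (Fin n) ℤ).val (x m).val) ∧ (n : ℤ) ^ 2 ≤ |trace (x 0).val|

/-- all the data used for a ping-pong -/
def Dat {n : ℕ} (w : List (Fin 4)) (m : Fin 4) (T : Finset (Fin n)) (z : Fin n)
    (x : Fin 4 → GL (Fin n) ℤ) (Q Qi : Matrix (Fin n) (Fin n) ℂ) (l : Fin n → ℂ) : Prop :=
  Cond x ∧ Good (wd x w : GL (Fin n) ℤ).val (x m).val ∧
  (∀ w' : List (Fin 4), w' ≠ [] → w'.length ≤ 4 * n + 3 → (∃ m, m ∉ w') →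
    |trace (wd x w').val| ≤ |trace (wd x w).val|) ∧ (n : ℤ) ^ 2 ≤ |trace (wd x w).val| ∧
  Qi * Q = 1 ∧ toC n (wd x w) = Q * diagonal l * Qi ∧ (∀ j, l j ≠ 0) ∧
  (∀ j, j ≠ z → (Qi * toC n (x m) * Q) z j = 1) ∧
  (∀ j k, j ∉ T → k ∈ T →
    ((|trace (wd x w).val| : ℤ) : ℝ) * ‖l j‖ ^ (2 * n) ≤ ‖l k‖ ^ (2 * n))

theorem uniform_dat (hn : 2 ≤ n) (w : List (Fin 4)) (m : Fin 4) (T : Finset (Fin n))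
    (hT : T.Nonempty) (hT' : ∃ j, j ∉ T) (z : Fin n) :
    ∃ K : ℕ, ∀ x Q Qi l, Dat w m T z x Q Qi l →
      FreeSemi (wd x w ^ K) (x m * wd x w ^ K) := by
  let I := {d : (Fin 4 → GL (Fin n) ℤ) × Matrix (Fin n) (Fin n) ℂ × Matrix (Fin n) (Fin n) ℂ ×
    (Fin n → ℂ) // Dat w m T z d.1 d.2.1 d.2.2.1 d.2.2.2}
  have hwd : ∀ (x : Fin 4 → GL (Fin n) ℤ) l, wd (fun m => toC n (x m)) l = toC n (wd x l) :=
    fun x l => wd_map (toC n) x l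
  obtain ⟨K, hK⟩ := step3 (I := I) (R := fun i => ((|trace (wd i.1.1 w).val| : ℤ) : ℝ)) hn
    (fun i => by
      have h1 : (n : ℤ) ^ 2 ≤ |trace (wd i.1.1 w).val| := i.2.2.2.2.1
      have h2 : (2 : ℤ) ≤ n := by exact_mod_cast hn
      have : (2 : ℤ) ≤ |trace (wd i.1.1 w).val| := by nlinarith
      exact_mod_cast this)
    (fun i m => toC n (i.1.1 m))
    (fun i l h1 h2 h3 => by
      rw [hwd, toC_trace]
      exact_mod_cast i.2.2.2.1 l h1 h2 h3)
    (fun i => by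
      rw [toC_apply, toC_apply, fk_map]
      refine one_le_norm_cast ?_
      have := (i.2.1.1 [0] 1 (by simp) (by simp) (by simp)).2.1
      rwa [wd_single] at this)
    w m
    (fun i => by
      rw [hwd, toC_apply, hk_map]
      exact one_le_norm_cast i.2.2.1.1)
    (fun i => by
      rw [hwd, toC_apply, toC_apply, fk_map]
      exact one_le_norm_cast i.2.2.1.2.1)
    (fun k i => by
      rw [hwd, toC_apply, toC_apply, gk_map]
      exact one_le_norm_cast (i.2.2.1.2.2 k))
    (fun i => i.1.2.1) (fun i => i.1.2.2.1) (fun i => i.1.2.2.2)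
    (fun i => i.2.2.2.2.2.1) (fun i => by rw [hwd]; exact i.2.2.2.2.2.2.1)
    (fun i => i.2.2.2.2.2.2.2.1) (fun i => (Group.isUnit _).map (toC n)) z
    (fun i => i.2.2.2.2.2.2.2.2.1) T hT hT' (fun i => i.2.2.2.2.2.2.2.2.2)
  refine ⟨K, fun x Q Qi l hd => ?_⟩
  have := hK ⟨(x, Q, Qi, l), hd⟩
  simp only [hwd] at this
  rw [← map_pow, ← map_mul] at this
  exact freeSemi_of_map (toC n) this

theorem exists_dat (hn : 2 ≤ n) (x : Fin 4 → GL (Fin n) ℤ) (hx : Cond x) (z : Fin n) :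
    ∃ (w : List (Fin 4)) (m : Fin 4) (T : Finset (Fin n)) (Q Qi : Matrix (Fin n) (Fin n) ℂ)
      (l : Fin n → ℂ), w.length ≤ 4 * n + 3 ∧ T.Nonempty ∧ (∃ j, j ∉ T) ∧
      Dat w m T z x Q Qi l := by
  let W : Set (List (Fin 4)) := {w | w ≠ [] ∧ w.length ≤ 4 * n + 3 ∧ ∃ m, m ∉ w}
  have hW : W.Finite := (List.finite_length_le (Fin 4) (4 * n + 3)).subset fun w hw => hw.2.1
  have h0 : ([0] : List (Fin 4)) ∈ W := ⟨by simp, by simp, 1, by simp⟩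
  obtain ⟨w, hw, hmax⟩ := Set.exists_max_image W (fun w => |trace (wd x w).val|) hW ⟨_, h0⟩
  obtain ⟨hw1, hw2, m, hm⟩ := hw
  have hgood := hx.1 w m hw1 hw2 hm
  have hhk : hk (toC n (wd x w)) ≠ 0 := by
    rw [toC_apply, hk_map]
    exact fun h => hgood.1 (by simpa using h)
  have hfk : fk (toC n (wd x w)) (toC n (x m)) ≠ 0 := by
    rw [toC_apply, toC_apply, fk_map]
    exact fun h => hgood.2.1 (by simpa using h)
  obtain ⟨Q, Qi, l, hQ, hA, hz⟩ := exists_diag_norm _ _ hhk hfk z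
  have hQ' : Q * Qi = 1 := mul_eq_one_comm.1 hQ
  have hdet : ‖∏ j, l j‖ = 1 := by
    have h1 : (toC n (wd x w)).det = ∏ j, l j := by
      rw [hA, det_mul, det_mul, det_diagonal]
      have h2 : Qi.det * Q.det = 1 := by rw [← det_mul, hQ, det_one]
      linear_combination (∏ j, l j) * h2
    rw [← h1, toC_apply]
    have h2 := RingHom.map_det (Int.castRingHom ℂ) (wd x w).val
    rw [RingHom.mapMatrix_apply] at h2
    rw [← h2]
    have h3 : IsUnit (wd x w).val.det := (Matrix.isUnit_iff_isUnit_det _).1 (wd x w).isUnit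
    rcases Int.isUnit_iff.1 h3 with h | h <;> simp [h]
  have hl0 : ∀ j, l j ≠ 0 := by
    intro j hj
    rw [Finset.prod_eq_zero (Finset.mem_univ j) hj] at hdet
    simp at hdet
  have hn2 : (n : ℤ) ^ 2 ≤ |trace (wd x w).val| := by
    have := hmax _ h0
    simp only [wd_single] at this
    exact hx.2.trans this
  obtain ⟨T, hT, hT', hgap⟩ := exists_gap hn (fun j => ‖l j‖) (fun j => norm_pos_iff.2 (hl0 j))
    (by rw [← norm_prod]; exact hdet) ((|trace (wd x w).val| : ℤ) : ℝ) (by exact_mod_cast hn2)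
    (by
      rw [← toC_trace, hA, trace_conj' hQ, trace_diagonal]
      exact norm_sum_le _ _)
  exact ⟨w, m, T, Q, Qi, l, hw2, hT, hT', hx, hgood, fun w' h1 h2 h3 => hmax w' ⟨h1, h2, h3⟩,
    hn2, hQ, hA, hl0, hz, hgap⟩

theorem uniformK (hn : 2 ≤ n) : ∃ K0 : ℕ, ∀ x : Fin 4 → GL (Fin n) ℤ, Cond x →
    ∃ (w : List (Fin 4)) (m : Fin 4) (K : ℕ), w.length ≤ 4 * n + 3 ∧ K ≤ K0 ∧
      FreeSemi (wd x w ^ K) (x m * wd x w ^ K) := by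
  let z : Fin n := ⟨0, by omega⟩
  have hfin : {w : List (Fin 4) | w.length ≤ 4 * n + 3}.Finite := List.finite_length_le _ _
  have hK : ∀ (w : List (Fin 4)) (m : Fin 4) (T : Finset (Fin n)), ∃ K : ℕ, T.Nonempty →
      (∃ j, j ∉ T) → ∀ x Q Qi l, Dat w m T z x Q Qi l →
      FreeSemi (wd x w ^ K) (x m * wd x w ^ K) := by
    intro w m T
    by_cases h : T.Nonempty ∧ ∃ j, j ∉ T
    · obtain ⟨K, hK⟩ := uniform_dat hn w m T h.1 h.2 z
      exact ⟨K, fun _ _ => hK⟩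
    · exact ⟨0, fun h1 h2 => (h ⟨h1, h2⟩).elim⟩
  choose K hK using hK
  refine ⟨∑ w ∈ hfin.toFinset, ∑ m, ∑ T, K w m T, fun x hx => ?_⟩
  obtain ⟨w, m, T, Q, Qi, l, hw, hT, hT', hd⟩ := exists_dat hn x hx z
  refine ⟨w, m, K w m T, hw, ?_, hK w m T hT hT' x Q Qi l hd⟩
  refine le_trans ?_ (Finset.single_le_sum (f := fun w => ∑ m, ∑ T, K w m T)
    (fun _ _ => Nat.zero_le _) (hfin.mem_toFinset.2 hw))
  refine le_trans ?_ (Finset.single_le_sum (f := fun m => ∑ T, K w m T)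
    (fun _ _ => Nat.zero_le _) (Finset.mem_univ m))
  exact Finset.single_le_sum (f := fun T => K w m T)
    (fun _ _ => Nat.zero_le _) (Finset.mem_univ T)

end


section
open Matrix
variable {n : ℕ}

/-- a diagonal matrix with two nontrivial entries is a product of transvections -/
theorem whitehead {K : Type*} [Field K] {a b : Fin n} (hab : a ≠ b) (t : K) (ht : t ≠ 0) :
    transvection a b t * (transvection b a (-t⁻¹) * (transvection a b t *
      (transvection a b (-1) * (transvection b a 1 * (transvection a b (-1) * 1))))) =
    diagonal (fun i => if i = a then t else if i = b then t⁻¹ else 1) := by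
  have hba := hab.symm
  ext p q
  by_cases hpa : p = a
  · subst hpa
    simp only [transvection_mul_apply_same, transvection_mul_apply_of_ne _ _ _ _ hab,
      transvection_mul_apply_of_ne _ _ _ _ hba, diagonal_apply, one_apply, if_true]
    by_cases hq : p = q
    · subst hq; simp [hba]; field_simp; ring_nf; simp
    · by_cases hq' : b = q <;> simp [hq, hq'] <;> field_simp <;> ring
  · by_cases hpb : p = b
    · subst hpb
      simp only [transvection_mul_apply_same, transvection_mul_apply_of_ne _ _ _ _ hab,
        transvection_mul_apply_of_ne _ _ _ _ hba, diagonal_apply, one_apply, if_true]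
      by_cases hq : p = q
      · subst hq; simp [hab, hba]; try (field_simp; ring)
      · by_cases hq' : a = q <;> simp [hq, hq'] <;> try (field_simp; ring)
    · simp only [transvection_mul_apply_of_ne _ _ _ _ hpa,
        transvection_mul_apply_of_ne _ _ _ _ hpb, diagonal_apply, one_apply, hpa, hpb, if_false]

/-- a submonoid of matrices containing all transvections contains all matrices of det 1 -/
theorem transv_gen {K : Type*} [Field K] (T : Submonoid (Matrix (Fin n) (Fin n) K))
    (hT : ∀ i j, i ≠ j → ∀ c : K, transvection i j c ∈ T) (M : Matrix (Fin n) (Fin n) K)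
    (hM : M.det = 1) : M ∈ T := by
  classical
  obtain ⟨L, L', d, h⟩ := Pivot.exists_list_transvec_mul_diagonal_mul_list_transvec M
  have hL : ∀ L : List (TransvectionStruct (Fin n) K), (L.map TransvectionStruct.toMatrix).prod ∈ T := by
    intro L
    apply T.list_prod_mem
    intro x hx
    obtain ⟨s, _, rfl⟩ := List.mem_map.1 hx
    exact hT s.i s.j s.hij s.c
  rw [h] at hM ⊢
  refine T.mul_mem (T.mul_mem (hL L) ?_) (hL L')
  have hd : ∏ i, d i = 1 := by simpa using hM
  have hd0 : ∀ i, d i ≠ 0 := by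
    intro i hi
    rw [Finset.prod_eq_zero (Finset.mem_univ i) hi] at hd
    exact zero_ne_one hd
  rcases isEmpty_or_nonempty (Fin n) with he | ⟨⟨i0⟩⟩
  · have : diagonal d = 1 := by ext i; exact he.elim i
    rw [this]; exact T.one_mem
  have key : ∀ s : Finset (Fin n), i0 ∉ s →
      diagonal (fun i => if i ∈ s then d i else if i = i0 then (∏ j ∈ s, d j)⁻¹ else 1) ∈ T := by
    intro s
    induction s using Finset.induction_on with
    | empty => 
      intro _
      have : (diagonal (fun i => if i ∈ (∅ : Finset (Fin n)) then d i else
          if i = i0 then (∏ j ∈ (∅ : Finset (Fin n)), d j)⁻¹ else 1)) = 1 := by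
        rw [← diagonal_one]; congr 1; ext i; simp
      rw [this]; exact T.one_mem
    | insert a s ha ih =>
      intro hi
      have h1 : i0 ∉ s := fun h => hi (by simp [h])
      have hne : a ≠ i0 := fun h => hi (by simp [h])
      have := T.mul_mem (ih h1) (show _ ∈ T from
        T.mul_mem (hT a i0 hne (d a)) (T.mul_mem (hT i0 a hne.symm (-(d a)⁻¹)) 
        (T.mul_mem (hT a i0 hne (d a)) (T.mul_mem (hT a i0 hne (-1)) (T.mul_mem (hT i0 a hne.symm 1)
        (T.mul_mem (hT a i0 hne (-1)) T.one_mem))))))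
      rw [whitehead hne _ (hd0 a), diagonal_mul_diagonal] at this
      convert this using 2
      ext i
      by_cases hia : i = a
      · subst hia; simp [ha, hne]
      · by_cases hi0 : i = i0
        · subst hi0; simp [hia, h1, Finset.prod_insert ha, mul_comm]
        · simp [hia, hi0]
  convert key (Finset.univ.erase i0) (by simp) using 2
  ext i
  by_cases hi0 : i = i0
  · subst hi0
    rw [← Finset.mul_prod_erase _ _ (Finset.mem_univ i)] at hd
    simpa using eq_inv_of_mul_eq_one_left hd
  · simp [hi0]

end


section
open Matrix
variable {n : ℕ}

theorem surj_lift (p : Fin 4 → ℕ) [hp : ∀ l, Fact (p l).Prime] (hinj : Function.Injective p)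
    (h : ∀ l, Matrix (Fin n) (Fin n) (ZMod (p l))) (hh : ∀ l, (h l).det = 1) :
    ∃ t : GL (Fin n) ℤ, ∀ l, t.val.map (Int.castRingHom (ZMod (p l))) = h l := by
  classical
  let ψ : GL (Fin n) ℤ →* (∀ l, GL (Fin n) (ZMod (p l))) :=
    MonoidHom.pi (fun l => GeneralLinearGroup.map (Int.castRingHom (ZMod (p l))))
  have hsub : ∀ l, ∃ u : GL (Fin n) (ZMod (p l)), u.val = h l ∧
      Pi.mulSingle l u ∈ ψ.range := by
    intro l
    let T : Submonoid (Matrix (Fin n) (Fin n) (ZMod (p l))) :=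
      (ψ.range.comap (MonoidHom.mulSingle (fun l => GL (Fin n) (ZMod (p l))) l)).toSubmonoid.map
        (Units.coeHom _)
    have hT : ∀ i j, i ≠ j → ∀ c : ZMod (p l), transvection i j c ∈ T := by
      intro i j hij c
      let N : ℕ := ∏ k ∈ Finset.univ.erase l, p k
      have hN : (N : ZMod (p l)) ≠ 0 := by
        rw [Ne, ZMod.natCast_eq_zero_iff, (hp l).out.prime.dvd_finsetProd_iff]
        rintro ⟨k, hk, hd⟩
        have := ((Nat.prime_dvd_prime_iff_eq (hp l).out (hp k).out).1 hd)
        exact (Finset.ne_of_mem_erase hk) (hinj this).symm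
      let z : ℤ := ((c * (N : ZMod (p l))⁻¹).val * N : ℕ)
      have hz : (z : ZMod (p l)) = c := by
        have h1 : (((c * (N : ZMod (p l))⁻¹).val : ℕ) : ZMod (p l)) = c * (N : ZMod (p l))⁻¹ :=
          ZMod.natCast_zmod_val _
        simp only [z]
        rw [Int.cast_natCast, Nat.cast_mul, h1, mul_assoc, inv_mul_cancel₀ hN, mul_one]
      have hz' : ∀ k, k ≠ l → (z : ZMod (p k)) = 0 := by
        intro k hk
        simp only [z, Int.cast_natCast]
        rw [ZMod.natCast_eq_zero_iff]
        exact Dvd.dvd.mul_left (Finset.dvd_prod_of_mem _ (by simp [hk])) _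
      let g : GL (Fin n) ℤ := ⟨transvection i j z, transvection i j (-z),
        by rw [transvection_mul_transvection_same _ _ hij]; simp,
        by rw [transvection_mul_transvection_same _ _ hij]; simp⟩
      have hmap : ∀ k, (ψ g k).val = transvection i j (z : ZMod (p k)) := by
        intro k
        change (transvection i j z).map (Int.castRingHom (ZMod (p k))) = _
        ext a b
        simp only [transvection, Matrix.map_apply, Matrix.add_apply, one_apply, single_apply, map_add]
        congr 1 <;> split_ifs <;> simp
      refine ⟨ψ g l, ?_, ?_⟩
      · refine ⟨g, ?_⟩
        funext k
        by_cases hk : k = l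
        · subst hk; simp
        · simp only [MonoidHom.mulSingle_apply, Pi.mulSingle_eq_of_ne hk]
          apply Units.ext
          rw [hmap, hz' k hk]; simp
      · change (ψ g l).val = _
        rw [hmap, hz]
    obtain ⟨u, hu, hu'⟩ := transv_gen T hT (h l) (hh l)
    exact ⟨u, hu', hu⟩
  choose u hu hu' using hsub
  obtain ⟨t, ht⟩ := Subgroup.pi_mem_of_mulSingle_mem (H := ψ.range) u hu'
  refine ⟨t, fun l => ?_⟩
  rw [← hu l, ← ht]
  rfl

theorem exists_D (hn : 2 ≤ n) : ∃ D : Matrix (Fin n) (Fin n) ℤ, D.det = 1 ∧ (∀ i j, D i j ≠ 0) ∧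
    (∀ s : Finset (Fin n), (D.submatrix (Subtype.val : s → Fin n) Subtype.val).det ≠ 0) ∧
    (n : ℤ) ^ 2 ≤ D.trace := by
  classical
  let z : Fin n := ⟨0, by omega⟩
  let o : Fin n := ⟨1, by omega⟩
  let P : Matrix (Fin n) (Fin n) ℤ := fun i j => if i = j then 1 else if j = z then n else 0
  have hnn : ∀ i j, 0 ≤ P i j := by
    intro i j
    simp only [P]; split_ifs <;> simp
  have hz : ∀ i, 0 < P i z := by
    intro i
    simp only [P]; split_ifs <;> simp; omega
  have hdet : P.det = 1 := by
    rw [det_of_isLowerTriangular]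
    · simp [P]
    · intro i j hij
      have hij' : i < j := hij
      have h1 : i ≠ j := hij'.ne
      have h2 : j ≠ z := by
        rintro rfl
        exact absurd hij' (by simp [z, Fin.lt_def])
      simp [P, h1, h2]
  have hpos : ∀ i j, 0 < (P * Pᵀ) i j := by
    intro i j
    rw [mul_apply]
    exact Finset.sum_pos' (fun k _ => mul_nonneg (hnn _ _) (hnn _ _))
      ⟨z, Finset.mem_univ _, mul_pos (hz i) (hz j)⟩
  refine ⟨P * Pᵀ, by simp [hdet], fun i j => (hpos i j).ne', ?_, ?_⟩
  · intro s hs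
    let PR : Matrix (Fin n) (Fin n) ℝ := P.map (Int.castRingHom ℝ)
    have hu : IsUnit PR := by
      rw [isUnit_iff_isUnit_det]
      have : PR.det = 1 := by
        have := (RingHom.map_det (Int.castRingHom ℝ) P)
        rw [hdet] at this
        simpa [PR] using this.symm
      rw [this]; exact isUnit_one
    have hpd : (PR * PRᴴ).PosDef := by
      apply PosDef.mul_conjTranspose_self
      exact vecMul_injective_of_isUnit hu
    have := (hpd.submatrix (e := (Subtype.val : s → Fin n)) Subtype.val_injective).det_pos
    have e : (PR * PRᴴ).submatrix (Subtype.val : s → Fin n) (Subtype.val : s → Fin n) =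
        ((P * Pᵀ).submatrix (Subtype.val : s → Fin n) (Subtype.val : s → Fin n)).map (Int.castRingHom ℝ) := by
      ext i j
      simp [PR, mul_apply]
    rw [e] at this
    have h2 := (RingHom.map_det (Int.castRingHom ℝ)
      ((P * Pᵀ).submatrix (Subtype.val : s → Fin n) (Subtype.val : s → Fin n)))
    rw [hs] at h2
    simp only [RingHom.mapMatrix_apply] at h2
    rw [← h2] at this
    simp at this
  · have h1 : (n : ℤ) ^ 2 ≤ (P * Pᵀ) o o := by
      rw [mul_apply]
      have := Finset.single_le_sum (f := fun k => P o k * Pᵀ k o)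
        (fun k _ => mul_nonneg (hnn _ _) (hnn _ _)) (Finset.mem_univ z)
      refine le_trans (le_of_eq ?_) this
      simp only [transpose_apply]; simp [P, z, o]; ring
    refine h1.trans ?_
    exact Finset.single_le_sum (f := fun k => (P * Pᵀ) k k)
        (fun k _ => (hpos _ _).le) (Finset.mem_univ o)

theorem exists_exp (n : ℕ) : ∃ e : Fin n → ℤ, ∑ i, e i = 0 ∧
    ∀ s t : Finset (Fin n), s.card = t.card → ∑ i ∈ s, e i = ∑ i ∈ t, e i → s = t := by
  classical
  refine ⟨fun i => n * 2 ^ (i : ℕ) - ∑ j : Fin n, 2 ^ (j : ℕ), ?_, ?_⟩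
  · simp [← Finset.mul_sum]
  · intro s t hst h
    rcases Nat.eq_zero_or_pos n with rfl | hn
    · ext i; exact i.elim0
    simp only [Finset.sum_sub_distrib, Finset.sum_const, hst, sub_left_inj, ← Finset.mul_sum] at h
    have h1 : ∑ i ∈ s, (2 : ℤ) ^ (i : ℕ) = ∑ i ∈ t, (2 : ℤ) ^ (i : ℕ) :=
      mul_left_cancel₀ (by positivity) h
    have h2 : s.map Fin.valEmbedding = t.map Fin.valEmbedding := by
      apply Finset.geomSum_injective (le_refl 2)
      simp only [Finset.sum_map, Fin.valEmbedding_apply]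
      exact_mod_cast h1
    exact Finset.map_injective _ h2

theorem two_zpow_sum {K : Type*} [Field K] (h2 : (2 : K) ≠ 0) {ι : Type*} (s : Finset ι)
    (e : ι → ℤ) : ∏ i ∈ s, (2 : K) ^ e i = 2 ^ ∑ i ∈ s, e i := by
  classical
  induction s using Finset.induction_on with
  | empty => simp
  | insert a s ha ih => rw [Finset.prod_insert ha, Finset.sum_insert ha, ih, zpow_add₀ h2]

theorem two_zpow_ne_one {p N : ℕ} [Fact p.Prime] (hp : 2 ^ N < p) (j : ℤ)
    (hj : |j| ≤ N) (h : (2 : ZMod p) ^ j = 1) : j = 0 := by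
  by_contra hj0
  have h1 : (2 : ZMod p) ^ j.natAbs = 1 := by
    rcases Int.natAbs_eq j with h' | h'
    · rw [h', zpow_natCast] at h; exact h
    · rw [h', _root_.zpow_neg, zpow_natCast, inv_eq_one] at h; exact h
  have h3 : ((2 ^ j.natAbs : ℕ) : ZMod p) = ((1 : ℕ) : ZMod p) := by push_cast; exact h1
  rw [ZMod.natCast_eq_natCast_iff] at h3
  have h4 : j.natAbs ≤ N := by
    rw [Int.abs_eq_natAbs] at hj; exact_mod_cast hj
  have h5 : 2 ^ j.natAbs ≤ 2 ^ N := Nat.pow_le_pow_right (by norm_num) h4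
  have h6 : 1 < 2 ^ j.natAbs := Nat.one_lt_two_pow (by omega)
  have := Nat.ModEq.eq_of_lt_of_lt h3 (by omega) (by omega)
  omega

theorem intCast_ne {p : ℕ} (z : ℤ) (hz : z ≠ 0) (hp : |z| < p) : (z : ZMod p) ≠ 0 := by
  rw [Ne, ZMod.intCast_zmod_eq_zero_iff_dvd]
  intro h
  exact hz (Int.eq_zero_of_abs_lt_dvd h hp)

end


section
open Matrix
variable {n : ℕ}

theorem targets (hn : 2 ≤ n) : ∃ (p : Fin 4 → ℕ) (_ : ∀ l, NeZero (p l))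
    (t : Fin 4 → GL (Fin n) ℤ), ∀ x : Fin 4 → GL (Fin n) ℤ,
    (∀ l k, (x l).val.map (Int.castRingHom (ZMod (p k))) =
      (t l).val.map (Int.castRingHom (ZMod (p k)))) → Cond x := by
  classical
  obtain ⟨D, hD1, hD2, hD3, hD4⟩ := exists_D hn
  obtain ⟨e, he0, he⟩ := exists_exp n
  let C : ℕ := (4 * n + 3) * (2 * ∑ i, (e i).natAbs)
  let B : ℕ := 2 ^ C + ∑ i, ∑ j, (D i j).natAbs +
    ∑ s : Finset (Fin n), (D.submatrix (Subtype.val : s → Fin n) Subtype.val).det.natAbs +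
    2 * D.trace.natAbs + 2
  let p : Fin 4 → ℕ := fun l => Nat.nth Nat.Prime (B + 1 + l)
  have hC0 : 0 < 2 ^ C := Nat.two_pow_pos C
  have hp : ∀ l, Fact (p l).Prime := fun l => ⟨Nat.prime_nth_prime _⟩
  have hmono := Nat.nth_strictMono Nat.infinite_setOfPred_prime
  have hinj : Function.Injective p := by
    intro a b hab
    have := hmono.injective hab
    exact Fin.ext (by omega)
  have hB : ∀ l, B < p l := by
    intro l
    have : B + 1 + l ≤ p l := hmono.le_apply
    omega
  have h2 : ∀ l, (2 : ZMod (p l)) ≠ 0 := by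
    intro l
    have h := hB l
    have := intCast_ne (p := p l) 2 (by norm_num) (by
      rw [abs_of_pos (by norm_num)]; exact_mod_cast (show 2 < p l by omega))
    exact_mod_cast this
  have hent : ∀ l i j, ((D i j : ℤ) : ZMod (p l)) ≠ 0 := by
    intro l i j
    apply intCast_ne _ (hD2 i j)
    rw [Int.abs_eq_natAbs]
    have h := hB l
    have h1 := Finset.single_le_sum (f := fun j => (D i j).natAbs) (fun _ _ => Nat.zero_le _)
      (Finset.mem_univ j)
    have h2 := Finset.single_le_sum (f := fun i => ∑ j, (D i j).natAbs) (fun _ _ => Nat.zero_le _)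
      (Finset.mem_univ i)
    exact_mod_cast (show (D i j).natAbs < p l from
      lt_of_le_of_lt (h1.trans (h2.trans (by omega))) h)
  have hmin : ∀ l (s : Finset (Fin n)), (((D.map (Int.castRingHom (ZMod (p l)))).submatrix
      (Subtype.val : s → Fin n) (Subtype.val : s → Fin n)).det) ≠ 0 := by
    intro l s
    have e1 := RingHom.map_det (Int.castRingHom (ZMod (p l)))
      (D.submatrix (Subtype.val : s → Fin n) (Subtype.val : s → Fin n))
    have e2 : ((D.map (Int.castRingHom (ZMod (p l)))).submatrix
      (Subtype.val : s → Fin n) (Subtype.val : s → Fin n)) = (Int.castRingHom (ZMod (p l))).mapMatrix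
        (D.submatrix (Subtype.val : s → Fin n) (Subtype.val : s → Fin n)) := rfl
    rw [e2, ← e1, eq_intCast]
    apply intCast_ne _ (hD3 s)
    rw [Int.abs_eq_natAbs]
    have h := hB l
    have h1 := Finset.single_le_sum (f := fun s : Finset (Fin n) =>
      (D.submatrix (Subtype.val : s → Fin n) (Subtype.val : s → Fin n)).det.natAbs)
      (fun _ _ => Nat.zero_le _) (Finset.mem_univ s)
    exact_mod_cast (lt_of_le_of_lt (h1.trans (by omega)) h)
  have hBC : ∀ l, 2 ^ C < p l := by
    intro l
    have := hB l
    omega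
  let lam : ∀ l, Fin n → ZMod (p l) := fun l i => 2 ^ e i
  have hlam : ∀ l (k : ℕ), k ≠ 0 → k ≤ 4 * n + 3 → ∀ s t : Finset (Fin n), s.card = t.card →
      ∏ i ∈ s, (lam l ^ k) i = ∏ i ∈ t, (lam l ^ k) i → s = t := by
    intro l k hk0 hk s t hst h
    simp only [Pi.pow_apply, Finset.prod_pow, lam] at h
    rw [two_zpow_sum (h2 l), two_zpow_sum (h2 l), ← zpow_natCast, ← zpow_natCast, ← _root_.zpow_mul,
      ← _root_.zpow_mul] at h
    have h' : (2 : ZMod (p l)) ^ ((∑ i ∈ s, e i) * k - (∑ i ∈ t, e i) * k) = 1 := by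
      rw [zpow_sub₀ (h2 l), h, div_self (zpow_ne_zero _ (h2 l))]
    have hab : ∀ s : Finset (Fin n), |∑ i ∈ s, e i| ≤ ∑ i, |e i| := fun s =>
      (Finset.abs_sum_le_sum_abs _ _).trans
        (Finset.sum_le_sum_of_subset_of_nonneg (Finset.subset_univ _) (fun _ _ _ => abs_nonneg _))
    have := two_zpow_ne_one (hBC l) _ (by
      rw [← sub_mul, abs_mul]
      have h3 : |∑ i ∈ s, e i - ∑ i ∈ t, e i| ≤ 2 * ∑ i, |e i| := by
        have := abs_sub (∑ i ∈ s, e i) (∑ i ∈ t, e i)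
        linarith [hab s, hab t]
      have h4 : |(k : ℤ)| ≤ 4 * n + 3 := by
        rw [abs_of_nonneg (by positivity)]; exact_mod_cast hk
      have h5 : (C : ℤ) = (4 * n + 3) * (2 * ∑ i, |e i|) := by
        simp [C, Int.natCast_natAbs]
      rw [h5, mul_comm]
      exact mul_le_mul h4 h3 (abs_nonneg _) (by positivity)) h'
    apply he s t hst
    have hk' : (k : ℤ) ≠ 0 := by exact_mod_cast hk0
    exact mul_right_cancel₀ hk' (sub_eq_zero.1 this)
  have hA1 : ∀ l, (diagonal (lam l)).det = 1 := by
    intro l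
    rw [det_diagonal]
    simp only [lam]
    rw [two_zpow_sum (h2 l), he0, zpow_zero]
  have hDd : ∀ l, (D.map (Int.castRingHom (ZMod (p l)))).det = 1 := by
    intro l
    have := RingHom.map_det (Int.castRingHom (ZMod (p l))) D
    rw [hD1, map_one] at this
    exact this.symm
  have ht : ∀ l, ∃ t : GL (Fin n) ℤ, ∀ k, t.val.map (Int.castRingHom (ZMod (p k))) =
      if k = l then D.map (Int.castRingHom (ZMod (p k))) else diagonal (lam k) := by
    intro l
    apply surj_lift p hinj
    intro k
    split_ifs
    · exact hDd k
    · exact hA1 k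
  choose t ht using ht
  refine ⟨p, fun l => ⟨(hp l).out.ne_zero⟩, t, fun x hx => ⟨?_, ?_⟩⟩
  · intro w m hw hwl hm
    apply Good.of_map (Int.castRingHom (ZMod (p m)))
    have e1 : (x m).val.map (Int.castRingHom (ZMod (p m))) = D.map (Int.castRingHom (ZMod (p m))) := by
      rw [hx, ht, if_pos rfl]
    have e2 : ((wd x w : GL (Fin n) ℤ).val).map (Int.castRingHom (ZMod (p m))) =
        diagonal (lam m ^ w.length) := by
      clear hw hwl
      induction w with
      | nil => simp [wd]
      | cons a w ih =>
        have hne : m ≠ a := fun h => hm (by simp [h])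
        have e3 : (wd x (a :: w) : GL (Fin n) ℤ).val = (x a).val * (wd x w : GL (Fin n) ℤ).val := by
          simp [wd]
        rw [e3, Matrix.map_mul, ih (fun h => hm (by simp [h])), hx, ht, if_neg hne,
          diagonal_mul_diagonal]
        congr 1
        ext i
        simp [pow_succ']
    rw [e1, e2]
    apply good_diag
    · exact hlam m _ (by simpa using hw) hwl
    · intro i j; exact hent m i j
    · exact hmin m
  · have e1 : (x 0).val.map (Int.castRingHom (ZMod (p 0))) = D.map (Int.castRingHom (ZMod (p 0))) := by
      rw [hx, ht, if_pos rfl]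
    have e2 : (((x 0).val.trace - D.trace : ℤ) : ZMod (p 0)) = 0 := by
      have := congrArg trace e1
      simp only [trace, diag_apply, Matrix.map_apply] at this ⊢
      push_cast
      simpa [sub_eq_zero] using this
    by_contra hlt
    push Not at hlt
    have h0 : (0 : ℤ) ≤ (n : ℤ) ^ 2 := by positivity
    have hb := hB 0
    have hb2 : 2 * D.trace < p 0 := by
      have h1 : 2 * D.trace.natAbs < p 0 := by omega
      omega
    have habs := abs_lt.1 hlt
    refine intCast_ne _ ?_ ?_ e2
    · intro h; linarith [habs.2]
    · rw [abs_lt]; constructor <;> linarith [habs.1, habs.2]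

end

theorem uniform_growth_of_surjection_onto_glnz {G : Type*} [Group G]
    (hG : Group.FG G) (n : ℕ) (hn : 2 ≤ n)
    (ρ : G →* GL (Fin n) ℤ) (hρ : Function.Surjective ρ) :
    1 < minGrowth G := by
  classical
  obtain ⟨p, hp, t, ht⟩ := targets hn
  obtain ⟨K0, hK0⟩ := uniformK hn
  obtain ⟨k, hk⟩ := finite_group_wordLe (∀ l, GL (Fin n) (ZMod (p l)))
  let ψ : GL (Fin n) ℤ →* (∀ l, GL (Fin n) (ZMod (p l))) :=
    MonoidHom.pi (fun l => Matrix.GeneralLinearGroup.map (Int.castRingHom (ZMod (p l))))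
  let ℓ : ℕ := k + K0 * ((4 * n + 3) * k) + 1
  have main : ∀ S : Finset G, Subgroup.closure (S : Set G) = ⊤ →
      (2 : ℝ) ^ ((ℓ : ℝ)⁻¹) ≤ growthRate (S : Set G) := by
    intro S hS
    have hg : ∀ l, ∃ g : G, WordLe (S : Set G) k g ∧ ψ (ρ g) = ψ (t l) := by
      intro l
      obtain ⟨h, hh⟩ := hρ (t l)
      obtain ⟨g, hg1, hg2⟩ := bounded_lift hk (ψ.comp ρ) (S : Set G) hS h
      exact ⟨g, hg1, by rw [← hh]; exact hg2⟩
    choose g hg1 hg2 using hg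
    obtain ⟨w, m, K, hw, hK, hf⟩ := hK0 (fun l => ρ (g l)) (ht _ (fun l j => by
      have := congrArg (fun u => (u j).val) (hg2 l)
      exact this))
    have hwd : ∀ w : List (Fin 4), WordLe (S : Set G) (w.length * k) (wd g w) := by
      intro w
      induction w with
      | nil => exact WordLe.one.mono (Nat.zero_le _)
      | cons a w ih =>
        have := (hg1 a).mul ih
        simp only [wd, List.map_cons, List.prod_cons, List.length_cons] at this ⊢
        exact this.mono (by ring_nf; omega)
    have hpw : ∀ j : ℕ, WordLe (S : Set G) (j * (w.length * k)) (wd g w ^ j) := by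
      intro j
      induction j with
      | zero => rw [pow_zero]; exact WordLe.one.mono (Nat.zero_le _)
      | succ j ih =>
        rw [pow_succ]
        exact (ih.mul (hwd w)).mono (by ring_nf; omega)
    have hle : K * (w.length * k) ≤ K0 * ((4 * n + 3) * k) :=
      Nat.mul_le_mul hK (Nat.mul_le_mul_right _ hw)
    apply growth_lower S hS ℓ (by omega) (wd g w ^ K) (g m * wd g w ^ K)
    · exact (hpw K).mono (by omega)
    · exact ((hg1 m).mul (hpw K)).mono (by omega)
    · apply freeSemi_of_map ρ
      rw [map_mul, map_pow, ← wd_map]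
      exact hf
  have h1 : (1 : ℝ) < (2 : ℝ) ^ ((ℓ : ℝ)⁻¹) :=
    Real.one_lt_rpow (by norm_num) (by positivity)
  refine h1.trans_le ?_
  apply le_csInf
  · obtain ⟨S, hS⟩ := Group.fg_def.1 hG
    exact ⟨_, S, hS, rfl⟩
  · rintro x ⟨S, hS, rfl⟩
    exact main S hS
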